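/- For every integer ω, the standard curve δ_ω has the minimal number of crossings among all stable planar curves with Whitney winding number ω, and this minimal number equals | |ω| − 1 |. -/

import Mathlib

open Set
open scoped ENNReal

noncomputable section

namespace CurvePaper


/-- The determinant of two vectors in the plane `ℝ² ≅ ℂ`. -/
def det2 (u v : ℂ) : ℝ := u.re * v.im - u.im * v.re

/-- The determinant of three vectors in `ℝ³`. -/
def det3 (a b c : EuclideanSpace ℝ (Fin 3)) : ℝ :=
  a 0 * (b 1 * c 2 - b 2 * c 1) - a 1 * (b 0 * c 2 - b 2 * c 0) + a 2 * (b 0 * c 1 - b 1 * c 0)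

/-- The homomorphism `φ : 𝕏 → ℤ`, `X_{a,b} ↦ a - b`, on the free abelian group `𝕏`
with basis `{X_{a,b} : a b ∈ ℤ}`. -/
def phi : FreeAbelianGroup (ℤ × ℤ) →+ ℤ :=
  FreeAbelianGroup.lift fun p : ℤ × ℤ => p.1 - p.2

/-! ### Planar curves -/

/-- A closed planar curve: a smooth immersion of the circle `ℝ/ℤ` into the plane. -/
structure PlanarCurve : Type where
  toFun : ℝ → ℂ
  periodic : Function.Periodic toFun 1
  smooth : ContDiff ℝ (⊤ : ℕ∞) toFun
  immersion : ∀ t : ℝ, deriv toFun t ≠ 0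

namespace PlanarCurve

/-- The number of parameters in one period mapping to a given point. -/
def multF (f : ℝ → ℂ) (p : ℂ) : ℕ := Set.ncard {t ∈ Set.Ico (0:ℝ) 1 | f t = p}

/-- All self-intersections of `f` at the point `p` are transverse. -/
def TransverseF (f : ℝ → ℂ) (p : ℂ) : Prop :=
  ∀ s ∈ Set.Ico (0:ℝ) 1, ∀ t ∈ Set.Ico (0:ℝ) 1, s ≠ t → f s = p → f t = p →
    det2 (deriv f s) (deriv f t) ≠ 0

/-- The set of self-intersection points of a parametrized curve. -/
def crossingSetF (f : ℝ → ℂ) : Set ℂ := {p : ℂ | 2 ≤ multF f p}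

/-- A parametrized curve is stable if its only self-intersections are finitely many
transverse double points. -/
def StableF (f : ℝ → ℂ) : Prop :=
  (crossingSetF f).Finite ∧ ∀ p : ℂ, multF f p ≤ 2 ∧ (multF f p = 2 → TransverseF f p)

/-- A planar curve is stable if its only self-intersections are transverse double points. -/
def Stable (c : PlanarCurve) : Prop := StableF c.toFun

/-- The number of crossings (self-intersection points) of a planar curve. -/
def crossings (c : PlanarCurve) : ℕ := (crossingSetF c.toFun).ncard

/-- `c` has Whitney winding number `ω`: the degree of the normalized derivative map
`S¹ → S¹`, expressed via a continuous lift of its angle. -/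
def HasWhitney (c : PlanarCurve) (ω : ℤ) : Prop :=
  ∃ θ : ℝ → ℝ, Continuous θ ∧
    (∀ t : ℝ, deriv c.toFun t = (‖deriv c.toFun t‖ : ℂ) * Complex.exp ((θ t : ℂ) * Complex.I)) ∧
    θ 1 - θ 0 = 2 * Real.pi * (ω : ℝ)

/-- `H` is a regular homotopy between parametrized curves `f` and `g`:
a continuously varying family of immersed closed curves. -/
def IsRegHomotopy (f g : ℝ → ℂ) (H : ℝ → ℝ → ℂ) : Prop :=
  (Continuous fun q : ℝ × ℝ => H q.1 q.2) ∧
  (Continuous fun q : ℝ × ℝ => deriv (H q.1) q.2) ∧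
  (∀ s : ℝ, Function.Periodic (H s) 1) ∧
  (∀ s : ℝ, ContDiff ℝ (⊤ : ℕ∞) (H s)) ∧
  (∀ s t : ℝ, deriv (H s) t ≠ 0) ∧
  H 0 = f ∧ H 1 = g

/-- Two planar curves are regularly homotopic. -/
def RegularlyHomotopic (c c' : PlanarCurve) : Prop :=
  ∃ H, IsRegHomotopy c.toFun c'.toFun H

/-- Two planar curves are homotopic through *stable* immersed curves. -/
def StablyHomotopic (c c' : PlanarCurve) : Prop :=
  ∃ H, IsRegHomotopy c.toFun c'.toFun H ∧ ∀ s ∈ Set.Icc (0:ℝ) 1, StableF (H s)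

/-- A point of a curve which is either a regular point or a transverse double point. -/
def StablePointF (f : ℝ → ℂ) (p : ℂ) : Prop :=
  multF f p ≤ 1 ∨ (multF f p = 2 ∧ TransverseF f p)

/-- A curve exhibiting a single `J`-type singularity (a first-order tangency of two
strands), all other points being stable. -/
def JSingF (f : ℝ → ℂ) : Prop :=
  ∃ p : ℂ, multF f p = 2 ∧
    (∀ s ∈ Set.Ico (0:ℝ) 1, ∀ t ∈ Set.Ico (0:ℝ) 1, s ≠ t → f s = p → f t = p →
      ∃ r : ℝ, r ≠ 0 ∧ deriv f t = (r : ℂ) * deriv f s ∧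
        det2 (deriv f s) (iteratedDeriv 2 f s) * ‖deriv f t‖ ^ 3 ≠
          (if 0 < r then 1 else -1) * det2 (deriv f t) (iteratedDeriv 2 f t) * ‖deriv f s‖ ^ 3) ∧
    (∀ q : ℂ, q ≠ p → StablePointF f q) ∧ (crossingSetF f).Finite

/-- A curve exhibiting a single `S`-type singularity (three strands meeting at one point,
pairwise transversally), all other points being stable. -/
def SSingF (f : ℝ → ℂ) : Prop :=
  ∃ p : ℂ, multF f p = 3 ∧ TransverseF f p ∧
    (∀ q : ℂ, q ≠ p → StablePointF f q) ∧ (crossingSetF f).Finite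

/-- A `J` move: a regular homotopy between stable curves passing through exactly one
singular moment, of `J`-type. -/
def JMove (c c' : PlanarCurve) : Prop :=
  c.Stable ∧ c'.Stable ∧ ∃ H, IsRegHomotopy c.toFun c'.toFun H ∧
    ∃ s₀ ∈ Set.Ioo (0:ℝ) 1, (∀ s ∈ Set.Icc (0:ℝ) 1, s ≠ s₀ → StableF (H s)) ∧ JSingF (H s₀)

/-- An `S` move: a regular homotopy between stable curves passing through exactly one
singular moment, of `S`-type. -/
def SMove (c c' : PlanarCurve) : Prop :=
  c.Stable ∧ c'.Stable ∧ ∃ H, IsRegHomotopy c.toFun c'.toFun H ∧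
    ∃ s₀ ∈ Set.Ioo (0:ℝ) 1, (∀ s ∈ Set.Icc (0:ℝ) 1, s ≠ s₀ → StableF (H s)) ∧ SSingF (H s₀)

/-- A basic move is a `J` move or an `S` move. -/
def BasicMove (c c' : PlanarCurve) : Prop := JMove c c' ∨ SMove c c'

/-- An increasing `J` move adds two crossings. -/
def IncreasingJMove (c c' : PlanarCurve) : Prop :=
  JMove c c' ∧ c'.crossings = c.crossings + 2

/-- A decreasing `J` move removes two crossings. -/
def DecreasingJMove (c c' : PlanarCurve) : Prop :=
  JMove c c' ∧ c.crossings = c'.crossings + 2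

/-- A `Z` move: the composite of an increasing `J` move, an `S` move and a decreasing
`J` move (sliding an empty 1-gon past a transverse strand). -/
def ZMove (c c' : PlanarCurve) : Prop :=
  ∃ c₁ c₂, IncreasingJMove c c₁ ∧ SMove c₁ c₂ ∧ DecreasingJMove c₂ c'

/-- A sequence of `k` basic moves leading from `c` to `c'` (allowing an initial
deformation through stable curves). -/
def ChainFromTo (c c' : PlanarCurve) (seq : ℕ → PlanarCurve) (k : ℕ) : Prop :=
  StablyHomotopic c (seq 0) ∧ seq k = c' ∧ ∀ i < k, BasicMove (seq i) (seq (i+1))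

/-- The distance between two curves: the minimal number of basic moves needed to pass
from `c` to `c'` (`⊤` if they are not regularly homotopic). -/
def dist (c c' : PlanarCurve) : ℕ∞ :=
  sInf {m : ℕ∞ | ∃ k : ℕ, m = (k : ℕ∞) ∧ ∃ seq : ℕ → PlanarCurve, ChainFromTo c c' seq k}

/-- The diameter of a set of curves. -/
def diam (A : Set PlanarCurve) : ℕ∞ := ⨆ c ∈ A, ⨆ c' ∈ A, dist c c'

/-- `B^ω_n`: the set of all stable planar curves with Whitney number `ω` and at most
`n` crossings. -/
def B (ω : ℤ) (n : ℕ) : Set PlanarCurve :=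
  {c : PlanarCurve | c.Stable ∧ c.HasWhitney ω ∧ c.crossings ≤ n}

/-- A step of the algorithm: an `S` move, a decreasing `J` move, or a `Z` move whose two
intermediate curves have at most `N` crossings; `w` is the number of basic moves used. -/
def AlgStep (N : ℕ) (c c' : PlanarCurve) (w : ℕ) : Prop :=
  (SMove c c' ∧ w = 1) ∨ (DecreasingJMove c c' ∧ w = 1) ∨
  ((∃ c₁ c₂, IncreasingJMove c c₁ ∧ SMove c₁ c₂ ∧ DecreasingJMove c₂ c' ∧
      c₁.crossings ≤ N ∧ c₂.crossings ≤ N) ∧ w = 3)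

/-! #### The invariant `f^X` -/

/-- The set of parameter pairs (in one period) realizing the double points of a curve. -/
def crossingPairsF (f : ℝ → ℂ) : Set (ℝ × ℝ) :=
  {q : ℝ × ℝ | q.1 ∈ Set.Ico (0:ℝ) 1 ∧ q.2 ∈ Set.Ico (0:ℝ) 1 ∧ q.1 < q.2 ∧ f q.1 = f q.2}

/-- The sign `i(v) ∈ {1,-1}` of a double point visited first at time `s` and then at
time `t`: `1` iff the tangents, in the order visited, form a positive basis. -/
def crossSign (f : ℝ → ℂ) (s t : ℝ) : ℤ :=
  if 0 < det2 (deriv f s) (deriv f t) then 1 else -1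

/-- The index `i(e)` of the subarc `e` of `f` on the parameter interval `(α, β)`:
the sum of the signs of the double points of `e`. -/
def arcIndex (f : ℝ → ℂ) (α β : ℝ) : ℤ :=
  ∑ᶠ q ∈ {q : ℝ × ℝ | q.1 ∈ Set.Ioo α β ∧ q.2 ∈ Set.Ioo α β ∧ q.1 < q.2 ∧ f q.1 = f q.2},
    crossSign f q.1 q.2

/-- The order one invariant `f^X(c) = ∑_v X_{a(v),b(v)} ∈ 𝕏`, where for each double
point `v` the two arcs of `c` based at `v` are ordered by the orientation of the tangents. -/
def fX (c : PlanarCurve) : FreeAbelianGroup (ℤ × ℤ) :=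
  ∑ᶠ q ∈ crossingPairsF c.toFun,
    if 0 < det2 (deriv c.toFun q.1) (deriv c.toFun q.2) then
      FreeAbelianGroup.of (arcIndex c.toFun q.1 q.2, arcIndex c.toFun q.2 (q.1 + 1))
    else
      FreeAbelianGroup.of (arcIndex c.toFun q.2 (q.1 + 1), arcIndex c.toFun q.1 q.2)

/-- The integer valued invariant `g = φ ∘ f^X`. -/
def g (c : PlanarCurve) : ℤ := phi (fX c)

/-! #### The standard curves `δ_ω` -/

/-- An explicit stable curve with winding number `m ≥ 1` and `m - 1` (inward) loops. -/
def deltaFunPos (m : ℕ) : ℝ → ℂ := fun t =>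
  Complex.exp (((2 * Real.pi * (m : ℝ) * t : ℝ) : ℂ) * Complex.I) +
    ((2 * (m : ℝ) / 3 : ℝ) : ℂ) * Complex.exp (((2 * Real.pi * t : ℝ) : ℂ) * Complex.I)

/-- The standard planar curve `δ_ω` with Whitney number `ω` and `||ω|-1|` crossings:
for `ω = 0` a figure eight, and for `ω ≠ 0` a round circle with `|ω| - 1` small loops. -/
def deltaFun (ω : ℤ) : ℝ → ℂ :=
  if ω = 0 then
    fun t => ((Real.sin (2 * Real.pi * t) : ℝ) : ℂ) + ((Real.sin (4 * Real.pi * t) : ℝ) : ℂ) * Complex.I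
  else if 0 < ω then deltaFunPos ω.toNat
  else fun t => (starRingEnd ℂ) (deltaFunPos (-ω).toNat t)

end PlanarCurve


/-! ### Spherical curves -/


/-- A closed spherical curve: a smooth immersion of the circle `ℝ/ℤ` into the unit
sphere `S² ⊆ ℝ³`. -/
structure SphericalCurve : Type where
  toFun : ℝ → EuclideanSpace ℝ (Fin 3)
  norm_one : ∀ t : ℝ, ‖toFun t‖ = 1
  periodic : Function.Periodic toFun 1
  smooth : ContDiff ℝ (⊤ : ℕ∞) toFun
  immersion : ∀ t : ℝ, deriv toFun t ≠ 0

namespace SphericalCurve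

def multF (f : ℝ → EuclideanSpace ℝ (Fin 3)) (p : EuclideanSpace ℝ (Fin 3)) : ℕ :=
  Set.ncard {t ∈ Set.Ico (0:ℝ) 1 | f t = p}

/-- Transversality of the branches at `p`: tangent vectors at `p` are pairwise
independent, detected by the `3×3` determinant with the base point `p` (the outward
normal of the sphere, fixing its orientation). -/
def TransverseF (f : ℝ → EuclideanSpace ℝ (Fin 3)) (p : EuclideanSpace ℝ (Fin 3)) : Prop :=
  ∀ s ∈ Set.Ico (0:ℝ) 1, ∀ t ∈ Set.Ico (0:ℝ) 1, s ≠ t → f s = p → f t = p →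
    det3 p (deriv f s) (deriv f t) ≠ 0

def crossingSetF (f : ℝ → EuclideanSpace ℝ (Fin 3)) : Set (EuclideanSpace ℝ (Fin 3)) :=
  {p | 2 ≤ multF f p}

def StableF (f : ℝ → EuclideanSpace ℝ (Fin 3)) : Prop :=
  (crossingSetF f).Finite ∧ ∀ p, multF f p ≤ 2 ∧ (multF f p = 2 → TransverseF f p)

def Stable (c : SphericalCurve) : Prop := StableF c.toFun

def crossings (c : SphericalCurve) : ℕ := (crossingSetF c.toFun).ncard

/-- The curve as a map into the sphere as a subtype. -/
def pt (c : SphericalCurve) (t : ℝ) : Metric.sphere (0 : EuclideanSpace ℝ (Fin 3)) 1 :=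
  ⟨c.toFun t, mem_sphere_zero_iff_norm.mpr (c.norm_one t)⟩

/-- The planar curve obtained from `c` by deleting the point `v ∈ S²` not on `c`
(stereographic projection from `v`). -/
def proj (c : SphericalCurve) (v : Metric.sphere (0 : EuclideanSpace ℝ (Fin 3)) 1) :
    ℝ → EuclideanSpace ℝ (Fin 2) :=
  haveI : Fact (Module.finrank ℝ (EuclideanSpace ℝ (Fin 3)) = 2 + 1) := ⟨by simp⟩
  fun t => stereographic' 2 v (c.pt t)

/-- `c` has (spherical) Whitney number `ω ∈ ℤ/2`: the parity of the winding number of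
the planar curve obtained by deleting from `S²` a point in the complement of `c`. -/
def HasWhitney (c : SphericalCurve) (ω : ZMod 2) : Prop :=
  ∃ v : Metric.sphere (0 : EuclideanSpace ℝ (Fin 3)) 1,
    (∀ t : ℝ, c.toFun t ≠ (v : EuclideanSpace ℝ (Fin 3))) ∧
    ∃ (m : ℤ) (θ : ℝ → ℝ), Continuous θ ∧
      (∀ t : ℝ, deriv (c.proj v) t =
        ‖deriv (c.proj v) t‖ •
          ((WithLp.equiv 2 (Fin 2 → ℝ)).symm ![Real.cos (θ t), Real.sin (θ t)])) ∧
      θ 1 - θ 0 = 2 * Real.pi * (m : ℝ) ∧ ω = (m : ZMod 2)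

def IsRegHomotopy (f g : ℝ → EuclideanSpace ℝ (Fin 3))
    (H : ℝ → ℝ → EuclideanSpace ℝ (Fin 3)) : Prop :=
  (Continuous fun q : ℝ × ℝ => H q.1 q.2) ∧
  (Continuous fun q : ℝ × ℝ => deriv (H q.1) q.2) ∧
  (∀ s t : ℝ, ‖H s t‖ = 1) ∧
  (∀ s : ℝ, Function.Periodic (H s) 1) ∧
  (∀ s : ℝ, ContDiff ℝ (⊤ : ℕ∞) (H s)) ∧
  (∀ s t : ℝ, deriv (H s) t ≠ 0) ∧
  H 0 = f ∧ H 1 = g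

def RegularlyHomotopic (c c' : SphericalCurve) : Prop :=
  ∃ H, IsRegHomotopy c.toFun c'.toFun H

def StablyHomotopic (c c' : SphericalCurve) : Prop :=
  ∃ H, IsRegHomotopy c.toFun c'.toFun H ∧ ∀ s ∈ Set.Icc (0:ℝ) 1, StableF (H s)

def StablePointF (f : ℝ → EuclideanSpace ℝ (Fin 3)) (p : EuclideanSpace ℝ (Fin 3)) : Prop :=
  multF f p ≤ 1 ∨ (multF f p = 2 ∧ TransverseF f p)

def JSingF (f : ℝ → EuclideanSpace ℝ (Fin 3)) : Prop :=
  ∃ p : EuclideanSpace ℝ (Fin 3), multF f p = 2 ∧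
    (∀ s ∈ Set.Ico (0:ℝ) 1, ∀ t ∈ Set.Ico (0:ℝ) 1, s ≠ t → f s = p → f t = p →
      ∃ r : ℝ, r ≠ 0 ∧ deriv f t = r • deriv f s ∧
        det3 p (deriv f s) (iteratedDeriv 2 f s) * ‖deriv f t‖ ^ 3 ≠
          (if 0 < r then 1 else -1) * det3 p (deriv f t) (iteratedDeriv 2 f t) * ‖deriv f s‖ ^ 3) ∧
    (∀ q, q ≠ p → StablePointF f q) ∧ (crossingSetF f).Finite

def SSingF (f : ℝ → EuclideanSpace ℝ (Fin 3)) : Prop :=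
  ∃ p : EuclideanSpace ℝ (Fin 3), multF f p = 3 ∧ TransverseF f p ∧
    (∀ q, q ≠ p → StablePointF f q) ∧ (crossingSetF f).Finite

def JMove (c c' : SphericalCurve) : Prop :=
  c.Stable ∧ c'.Stable ∧ ∃ H, IsRegHomotopy c.toFun c'.toFun H ∧
    ∃ s₀ ∈ Set.Ioo (0:ℝ) 1, (∀ s ∈ Set.Icc (0:ℝ) 1, s ≠ s₀ → StableF (H s)) ∧ JSingF (H s₀)

def SMove (c c' : SphericalCurve) : Prop :=
  c.Stable ∧ c'.Stable ∧ ∃ H, IsRegHomotopy c.toFun c'.toFun H ∧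
    ∃ s₀ ∈ Set.Ioo (0:ℝ) 1, (∀ s ∈ Set.Icc (0:ℝ) 1, s ≠ s₀ → StableF (H s)) ∧ SSingF (H s₀)

def BasicMove (c c' : SphericalCurve) : Prop := JMove c c' ∨ SMove c c'

def IncreasingJMove (c c' : SphericalCurve) : Prop :=
  JMove c c' ∧ c'.crossings = c.crossings + 2

def DecreasingJMove (c c' : SphericalCurve) : Prop :=
  JMove c c' ∧ c.crossings = c'.crossings + 2

def ZMove (c c' : SphericalCurve) : Prop :=
  ∃ c₁ c₂, IncreasingJMove c c₁ ∧ SMove c₁ c₂ ∧ DecreasingJMove c₂ c'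

def ChainFromTo (c c' : SphericalCurve) (seq : ℕ → SphericalCurve) (k : ℕ) : Prop :=
  StablyHomotopic c (seq 0) ∧ seq k = c' ∧ ∀ i < k, BasicMove (seq i) (seq (i+1))

def dist (c c' : SphericalCurve) : ℕ∞ :=
  sInf {m : ℕ∞ | ∃ k : ℕ, m = (k : ℕ∞) ∧ ∃ seq : ℕ → SphericalCurve, ChainFromTo c c' seq k}

def diam (A : Set SphericalCurve) : ℕ∞ := ⨆ c ∈ A, ⨆ c' ∈ A, dist c c'

def B (ω : ZMod 2) (n : ℕ) : Set SphericalCurve :=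
  {c : SphericalCurve | c.Stable ∧ c.HasWhitney ω ∧ c.crossings ≤ n}

def AlgStep (N : ℕ) (c c' : SphericalCurve) (w : ℕ) : Prop :=
  (SMove c c' ∧ w = 1) ∨ (DecreasingJMove c c' ∧ w = 1) ∨
  ((∃ c₁ c₂, IncreasingJMove c c₁ ∧ SMove c₁ c₂ ∧ DecreasingJMove c₂ c' ∧
      c₁.crossings ≤ N ∧ c₂.crossings ≤ N) ∧ w = 3)

/-! #### The invariant `f^X` for spherical curves -/

def crossingPairsF (f : ℝ → EuclideanSpace ℝ (Fin 3)) : Set (ℝ × ℝ) :=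
  {q : ℝ × ℝ | q.1 ∈ Set.Ico (0:ℝ) 1 ∧ q.2 ∈ Set.Ico (0:ℝ) 1 ∧ q.1 < q.2 ∧ f q.1 = f q.2}

def crossSign (f : ℝ → EuclideanSpace ℝ (Fin 3)) (s t : ℝ) : ℤ :=
  if 0 < det3 (f s) (deriv f s) (deriv f t) then 1 else -1

def arcIndex (f : ℝ → EuclideanSpace ℝ (Fin 3)) (α β : ℝ) : ℤ :=
  ∑ᶠ q ∈ {q : ℝ × ℝ | q.1 ∈ Set.Ioo α β ∧ q.2 ∈ Set.Ioo α β ∧ q.1 < q.2 ∧ f q.1 = f q.2},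
    crossSign f q.1 q.2

def fX (c : SphericalCurve) : FreeAbelianGroup (ℤ × ℤ) :=
  ∑ᶠ q ∈ crossingPairsF c.toFun,
    if 0 < det3 (c.toFun q.1) (deriv c.toFun q.1) (deriv c.toFun q.2) then
      FreeAbelianGroup.of (arcIndex c.toFun q.1 q.2, arcIndex c.toFun q.2 (q.1 + 1))
    else
      FreeAbelianGroup.of (arcIndex c.toFun q.2 (q.1 + 1), arcIndex c.toFun q.1 q.2)

def g (c : SphericalCurve) : ℤ := phi (fX c)

/-- Inverse stereographic projection `ℂ → S²` from the north pole. -/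
def stereoInv (z : ℂ) : EuclideanSpace ℝ (Fin 3) :=
  (WithLp.equiv 2 (Fin 3 → ℝ)).symm
    ![2 * z.re / (Complex.normSq z + 1), 2 * z.im / (Complex.normSq z + 1),
      (Complex.normSq z - 1) / (Complex.normSq z + 1)]

/-- The standard spherical curves `δ_0` (one crossing) and `δ_1` (embedded):
the images in `S²` of the standard planar curves `δ_0`, `δ_1`. -/
def deltaFun (ω : ZMod 2) : ℝ → EuclideanSpace ℝ (Fin 3) :=
  fun t => stereoInv (PlanarCurve.deltaFun (if ω = 0 then 0 else 1) t)

end SphericalCurve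


/-- The determinant of two vectors in `ℝ × ℝ`. -/
def det2P (u v : ℝ × ℝ) : ℝ := u.1 * v.2 - u.2 * v.1

/-- The closed region bounded by a subset of the plane: the set together with all the
bounded connected components of its complement. -/
def closedRegion (S : Set ℂ) : Set ℂ :=
  S ∪ {p : ℂ | p ∉ S ∧ Bornology.IsBounded (connectedComponentIn Sᶜ p)}



open Filter Topology in
theorem jump_count (N : ℝ → ℤ) (S : Finset ℝ)
    (hloc : ∀ s0 ∈ Icc (0:ℝ) 1, s0 ∉ S → ∀ᶠ s in 𝓝 s0, s ∈ Icc (0:ℝ) 1 → N s = N s0)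
    (hjump : ∀ s0 ∈ S, ∃ ε > 0, ∀ s1 s2 : ℝ, |s1 - s0| < ε → |s2 - s0| < ε →
      s1 ∈ Icc (0:ℝ) 1 → s2 ∈ Icc (0:ℝ) 1 → s1 ∉ S → s2 ∉ S → |N s1 - N s2| ≤ 1) :
    ∀ n : ℕ, ∀ a b : ℝ, 0 ≤ a → a ≤ b → b ≤ 1 → a ∉ S → b ∉ S →
      (S.filter (fun x => a < x ∧ x < b)).card = n → |N a - N b| ≤ (n : ℤ) := by
  intro n
  induction n using Nat.strong_induction_on with
  | _ n ih =>
  intro a b ha hab hb haS hbS hn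
  rcases Finset.eq_empty_or_nonempty (S.filter (fun x => a < x ∧ x < b)) with he | ⟨s0, hs0⟩
  · have hfree : ∀ x ∈ Icc a b, x ∉ S := by
      intro x hx hxS
      rcases eq_or_lt_of_le hx.1 with h | h
      · exact haS (h ▸ hxS)
      rcases eq_or_lt_of_le hx.2 with h' | h'
      · exact hbS (h' ▸ hxS)
      have : x ∈ S.filter (fun x => a < x ∧ x < b) := by simp [hxS, h, h']
      rw [he] at this; simp at this
    have hc : ContinuousOn N (Icc a b) := by
      intro x hx
      have hx01 : x ∈ Icc (0:ℝ) 1 := ⟨ha.trans hx.1, hx.2.trans hb⟩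
      have h1 := hloc x hx01 (hfree x hx)
      have h2 : N =ᶠ[𝓝[Icc a b] x] fun _ => N x := by
        have h3 := h1.filter_mono (nhdsWithin_le_nhds (s := Icc a b))
        filter_upwards [h3, self_mem_nhdsWithin] with y hy hy2
        exact hy ⟨ha.trans hy2.1, hy2.2.trans hb⟩
      exact (continuousWithinAt_const (b := N x)).congr_of_eventuallyEq h2 rfl
    have := isPreconnected_Icc.constant hc (left_mem_Icc.2 hab) (right_mem_Icc.2 hab)
    rw [this]; simp
  · obtain ⟨hs0S, has0, hs0b⟩ := by simpa using hs0
    obtain ⟨ε, hε, hj⟩ := hjump s0 hs0S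
    have hfin : ((S.erase s0 : Finset ℝ) : Set ℝ).Finite := Finset.finite_toSet _
    have hnb : ((S.erase s0 : Finset ℝ) : Set ℝ)ᶜ ∈ 𝓝 s0 :=
      hfin.isClosed.isOpen_compl.mem_nhds (by simp)
    obtain ⟨ρ, hρ, hball⟩ := Metric.mem_nhds_iff.1 hnb
    obtain ⟨r, hr, hr1, hr2, hr3, hr4⟩ : ∃ r > 0, r < ε ∧ r < ρ ∧ r < s0 - a ∧ r < b - s0 := by
      have h : 0 < min (min ε ρ) (min (s0 - a) (b - s0)) := by
        refine lt_min (lt_min hε hρ) (lt_min ?_ ?_) <;> linarith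
      refine ⟨_, half_pos h, ?_, ?_, ?_, ?_⟩ <;>
      · refine (half_lt_self h).trans_le ?_
        simp
    have hnot : ∀ x, |x - s0| < ρ → x ≠ s0 → x ∉ S := by
      intro x hx hne hxS
      have : x ∈ Metric.ball s0 ρ := by simpa [Real.dist_eq] using hx
      have := hball this
      simp [hne, hxS] at this
    have e1 : |(s0 - r) - s0| = r := by rw [show s0 - r - s0 = -r by ring, abs_neg, abs_of_pos hr]
    have e2 : |(s0 + r) - s0| = r := by rw [show s0 + r - s0 = r by ring, abs_of_pos hr]
    have n1 : s0 - r ∉ S := hnot _ (by rw [e1]; exact hr2) (by linarith)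
    have n2 : s0 + r ∉ S := hnot _ (by rw [e2]; exact hr2) (by linarith)
    set A := S.filter (fun x => a < x ∧ x < s0 - r)
    set B := S.filter (fun x => s0 + r < x ∧ x < b)
    have hAB : Disjoint A B := by
      rw [Finset.disjoint_left]; intro x hx hx'
      simp [A, B] at hx hx'; linarith
    have hs0AB : s0 ∉ A ∪ B := by
      simp [A, B]; constructor
      · intro _ _; linarith
      · intro _ h; linarith
    have hsub : insert s0 (A ∪ B) ⊆ S.filter (fun x => a < x ∧ x < b) := by
      intro x hx
      simp [A, B] at hx ⊢
      rcases hx with rfl | hx | hx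
      · exact ⟨hs0S, has0, hs0b⟩
      · exact ⟨hx.1, hx.2.1, by linarith⟩
      · exact ⟨hx.1, by linarith, hx.2.2⟩
    have hcard := Finset.card_le_card hsub
    rw [Finset.card_insert_of_notMem hs0AB, Finset.card_union_of_disjoint hAB, hn] at hcard
    have i1 := ih A.card (by omega) a (s0 - r) ha (by linarith) (by linarith) haS n1 rfl
    have i2 := ih B.card (by omega) (s0 + r) b (by linarith) (by linarith) hb n2 hbS rfl
    have i3 := hj (s0 - r) (s0 + r) (by rw [e1]; exact hr1) (by rw [e2]; exact hr1)
      ⟨by linarith, by linarith⟩ ⟨by linarith, by linarith⟩ n1 n2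
    rw [abs_le] at *
    constructor <;> omega

/-- `L` is an angle function for `h` on `[0,1]`. -/
def IsLift (h : ℝ → ℂ) (L : ℝ → ℝ) : Prop :=
  Continuous L ∧ ∀ u ∈ Icc (0:ℝ) 1, h u = (‖h u‖ : ℂ) * Complex.exp ((L u : ℂ) * Complex.I)

theorem exists_isLift (h : ℝ → ℂ) (hc : Continuous h) (hne : ∀ u ∈ Icc (0:ℝ) 1, h u ≠ 0)
    (α : ℝ) (hα : h 0 = (‖h 0‖ : ℂ) * Complex.exp ((α : ℂ) * Complex.I)) :
    ∃ L, IsLift h L ∧ L 0 = α := by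
  let γ : C(unitInterval, {z : ℂ // z ≠ 0}) :=
    ⟨fun u => ⟨h u, hne u u.2⟩, by fun_prop⟩
  have h0 : h 0 ≠ 0 := hne 0 (by simp)
  obtain ⟨Γ, hΓ, hΓ0⟩ := Complex.isCoveringMap_exp.exists_path_lifts γ
    ((Real.log ‖h 0‖ : ℂ) + (α : ℂ) * Complex.I) (by
      apply Subtype.ext
      simp only [γ]
      rw [Complex.exp_add, ← Complex.ofReal_exp, Real.exp_log (norm_pos_iff.2 h0)]
      simpa using hα)
  refine ⟨fun u => (Γ (projIcc 0 1 zero_le_one u)).im, ⟨?_, ?_⟩, ?_⟩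
  · exact Complex.continuous_im.comp (Γ.continuous.comp continuous_projIcc)
  · intro u hu
    have e := congrArg Subtype.val (congrFun hΓ ⟨u, hu⟩)
    simp only [γ, Function.comp, ContinuousMap.coe_mk] at e
    beta_reduce
    rw [projIcc_of_mem _ hu]
    set z := Γ ⟨u, hu⟩
    rw [← e, Complex.norm_exp, Complex.ofReal_exp, ← Complex.exp_add]
    congr 1
    exact (Complex.re_add_im z).symm
  · simp only [projIcc_left]
    have : (⟨0, by simp⟩ : unitInterval) = 0 := rfl
    rw [this, hΓ0]
    simp

theorem stay (E : ℝ → ℝ) (hE : Continuous E) (a b c : ℝ) (hab : a ≤ b)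
    (hcos : ∀ u ∈ Icc a b, Real.cos (E u) ≠ 0) (hc : Real.cos c = 0) (ha : |E a| < c) :
    |E b| < c := by
  by_contra hcon
  push Not at hcon
  obtain ⟨u, hu, he⟩ := intermediate_value_Icc hab (hE.abs.continuousOn) ⟨ha.le, hcon⟩
  apply hcos u hu
  simp only at he
  rw [← Real.cos_abs, he, hc]

theorem cos_pos_of_lift (z w : ℂ) (a b : ℝ) (hz : z = (‖z‖ : ℂ) * Complex.exp ((a : ℂ) * Complex.I))
    (hw : w = (‖w‖ : ℂ) * Complex.exp ((b : ℂ) * Complex.I)) :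
    (z * (starRingEnd ℂ) w).re = ‖z‖ * ‖w‖ * Real.cos (a - b) := by
  have : z * (starRingEnd ℂ) w = ((‖z‖ * ‖w‖ : ℝ) : ℂ) * Complex.exp (((a - b : ℝ) : ℂ) * Complex.I) := by
    conv_lhs => rw [hz, hw]
    rw [map_mul, Complex.conj_ofReal, ← Complex.exp_conj]
    simp only [map_mul, Complex.conj_ofReal, Complex.conj_I]
    push_cast
    rw [sub_mul, Complex.exp_sub, mul_neg, Complex.exp_neg]
    ring
  rw [this, Complex.re_ofReal_mul, Complex.exp_ofReal_mul_I_re]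

theorem cos_pos_of_close (z w : ℂ) (a b : ℝ) (hz : z = (‖z‖ : ℂ) * Complex.exp ((a : ℂ) * Complex.I))
    (hw : w = (‖w‖ : ℂ) * Complex.exp ((b : ℂ) * Complex.I)) (h : ‖z - w‖ < ‖w‖) :
    0 < Real.cos (a - b) := by
  have h1 := cos_pos_of_lift z w a b hz hw
  have h2 : 0 < (z * (starRingEnd ℂ) w).re := by
    have e : z * (starRingEnd ℂ) w = (z - w) * (starRingEnd ℂ) w + ((‖w‖ ^ 2 : ℝ) : ℂ) := by
      rw [sub_mul, Complex.mul_conj w, Complex.normSq_eq_norm_sq]; ring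
    rw [e, Complex.add_re, Complex.ofReal_re]
    have h3 := Complex.abs_re_le_norm ((z - w) * (starRingEnd ℂ) w)
    rw [norm_mul, Complex.norm_conj] at h3
    have h4 := (abs_le.1 h3).1
    have hw0 : 0 < ‖w‖ := lt_of_le_of_lt (norm_nonneg _) h
    nlinarith
  rw [h1] at h2
  by_contra hcon
  push Not at hcon
  have : ‖z‖ * ‖w‖ * Real.cos (a - b) ≤ 0 := mul_nonpos_of_nonneg_of_nonpos (by positivity) hcon
  linarith

/-- The window lemma: a path with at most one zero of `cos ψ`. -/
theorem window (ψ : ℝ → ℝ) (hψ : Continuous ψ) (a b : ℝ) (hab : a ≤ b) (c : ℝ)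
    (hc : Real.cos c = 0)
    (huniq : ∀ u ∈ Icc a b, ∀ v ∈ Icc a b, Real.cos (ψ u) = 0 → Real.cos (ψ v) = 0 → u = v)
    (ha : ψ a ∈ Ioo c (c + Real.pi)) : ψ b ∈ Ioo (c - Real.pi) (c + 2 * Real.pi) := by
  have hpi := Real.pi_pos
  constructor
  · by_contra hcon
    push Not at hcon
    obtain ⟨u, hu, eu⟩ := intermediate_value_Icc' hab hψ.continuousOn
      (show c ∈ Icc (ψ b) (ψ a) from ⟨by linarith, ha.1.le⟩)
    obtain ⟨v, hv, ev⟩ := intermediate_value_Icc' hab hψ.continuousOn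
      (show c - Real.pi ∈ Icc (ψ b) (ψ a) from ⟨hcon, by linarith [ha.1]⟩)
    have := huniq u hu v hv (by rw [eu, hc]) (by rw [ev, Real.cos_sub_pi, hc, neg_zero])
    rw [this] at eu; linarith
  · by_contra hcon
    push Not at hcon
    obtain ⟨u, hu, eu⟩ := intermediate_value_Icc hab hψ.continuousOn
      (show c + Real.pi ∈ Icc (ψ a) (ψ b) from ⟨ha.2.le, by linarith⟩)
    obtain ⟨v, hv, ev⟩ := intermediate_value_Icc hab hψ.continuousOn
      (show c + 2 * Real.pi ∈ Icc (ψ a) (ψ b) from ⟨by linarith [ha.2], hcon⟩)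
    have := huniq u hu v hv (by rw [eu, Real.cos_add_pi, hc, neg_zero])
      (by rw [ev, Real.cos_add_two_pi, hc])
    rw [this] at eu; linarith


theorem lift_diff (z : ℂ) (hz : z ≠ 0) (a b : ℝ)
    (ha : z = (‖z‖ : ℂ) * Complex.exp ((a : ℂ) * Complex.I))
    (hb : z = (‖z‖ : ℂ) * Complex.exp ((b : ℂ) * Complex.I)) :
    ∃ n : ℤ, a = b + 2 * Real.pi * n := by
  have h : Complex.exp ((a : ℂ) * Complex.I) = Complex.exp ((b : ℂ) * Complex.I) :=
    mul_left_cancel₀ (by simpa using hz : (‖z‖ : ℂ) ≠ 0) (ha.symm.trans hb)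
  obtain ⟨n, hn⟩ := Complex.exp_eq_exp_iff_exists_int.1 h
  refine ⟨n, ?_⟩
  have := congrArg Complex.im hn
  simp at this
  linarith

theorem pair_close (h1 h2 : ℝ → ℂ) (L1 L2 : ℝ → ℝ) (H1 : IsLift h1 L1) (H2 : IsLift h2 L2)
    (a b : ℝ) (ha : 0 ≤ a) (hab : a ≤ b) (hb : b ≤ 1) (c : ℝ) (hc : Real.cos c = 0)
    (hcl : ∀ u ∈ Icc a b, ‖h1 u - h2 u‖ < ‖h2 u‖) (hst : |L1 a - L2 a| < c) :
    |L1 b - L2 b| < c := by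
  refine stay (fun u => L1 u - L2 u) (H1.1.sub H2.1) a b c hab ?_ hc hst
  intro u hu
  have hu' : u ∈ Icc (0:ℝ) 1 := ⟨ha.trans hu.1, hu.2.trans hb⟩
  exact (cos_pos_of_close _ _ _ _ (H1.2 u hu') (H2.2 u hu') (hcl u hu)).ne'

theorem cos_five : Real.cos (5 * Real.pi / 2) = 0 := by
  rw [show 5 * Real.pi / 2 = Real.pi / 2 + 2 * Real.pi by ring, Real.cos_add_two_pi,
    Real.cos_pi_div_two]

theorem pair_window (h1 h2 : ℝ → ℂ) (L1 L2 : ℝ → ℝ) (H1 : IsLift h1 L1) (H2 : IsLift h2 L2)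
    (hn1 : ∀ u ∈ Icc (0:ℝ) 1, h1 u ≠ 0) (hn2 : ∀ u ∈ Icc (0:ℝ) 1, h2 u ≠ 0)
    (a b : ℝ) (ha : 0 ≤ a) (hab : a ≤ b) (hb : b ≤ 1)
    (hcl : ∀ u ∈ Icc 0 a, ‖h1 u - h2 u‖ < ‖h2 u‖)
    (hcl' : ∀ u ∈ Icc b 1, ‖h1 u - h2 u‖ < ‖h2 u‖)
    (hst : |L1 0 - L2 0| < Real.pi / 2) (v : ℂ) (hv : v ≠ 0)
    (hneg1 : (h1 a * (starRingEnd ℂ) v).re < 0) (hneg2 : (h2 a * (starRingEnd ℂ) v).re < 0)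
    (hu1 : ∀ u ∈ Icc a b, ∀ u' ∈ Icc a b, (h1 u * (starRingEnd ℂ) v).re = 0 →
      (h1 u' * (starRingEnd ℂ) v).re = 0 → u = u')
    (hu2 : ∀ u ∈ Icc a b, ∀ u' ∈ Icc a b, (h2 u * (starRingEnd ℂ) v).re = 0 →
      (h2 u' * (starRingEnd ℂ) v).re = 0 → u = u') :
    |L1 1 - L2 1| < 5 * Real.pi / 2 := by
  have hpi := Real.pi_pos
  have ha1 : a ∈ Icc (0:ℝ) 1 := ⟨ha, hab.trans hb⟩
  have hb1 : b ∈ Icc (0:ℝ) 1 := ⟨ha.trans hab, hb⟩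
  refine pair_close h1 h2 L1 L2 H1 H2 b 1 (ha.trans hab) hb le_rfl _ cos_five hcl' ?_
  have hEa := pair_close h1 h2 L1 L2 H1 H2 0 a le_rfl ha (hab.trans hb) _
    Real.cos_pi_div_two hcl hst
  have hEa' := cos_pos_of_close _ _ _ _ (H1.2 b hb1) (H2.2 b hb1) (hcl' b ⟨le_rfl, hb⟩)
  have hvv : v = (‖v‖ : ℂ) * Complex.exp ((Complex.arg v : ℂ) * Complex.I) :=
    (Complex.norm_mul_exp_arg_mul_I v).symm
  set β := Complex.arg v
  have key : ∀ (h : ℝ → ℂ) (L : ℝ → ℝ), IsLift h L → (∀ u ∈ Icc (0:ℝ) 1, h u ≠ 0) →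
      ∀ u ∈ Icc (0:ℝ) 1, ∃ p > 0, (h u * (starRingEnd ℂ) v).re = p * Real.cos (L u - β) := by
    intro h L hL hn u hu
    exact ⟨‖h u‖ * ‖v‖, mul_pos (norm_pos_iff.2 (hn u hu)) (norm_pos_iff.2 hv),
      cos_pos_of_lift _ _ _ _ (hL.2 u hu) hvv⟩
  have cneg : ∀ (h : ℝ → ℂ) (L : ℝ → ℝ), IsLift h L → (∀ u ∈ Icc (0:ℝ) 1, h u ≠ 0) →
      (h a * (starRingEnd ℂ) v).re < 0 → Real.cos (L a - β) < 0 := by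
    intro h L hL hn hneg
    obtain ⟨p, hp, e⟩ := key h L hL hn a ha1
    rw [e] at hneg
    by_contra hcon
    push Not at hcon
    have := mul_nonneg hp.le hcon
    linarith
  have cuniq : ∀ (h : ℝ → ℂ) (L : ℝ → ℝ), IsLift h L → (∀ u ∈ Icc (0:ℝ) 1, h u ≠ 0) →
      (∀ u ∈ Icc a b, ∀ u' ∈ Icc a b, (h u * (starRingEnd ℂ) v).re = 0 →
      (h u' * (starRingEnd ℂ) v).re = 0 → u = u') →
      ∀ u ∈ Icc a b, ∀ u' ∈ Icc a b, Real.cos (L u - β) = 0 → Real.cos (L u' - β) = 0 → u = u' := by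
    intro h L hL hn hun u hu u' hu' e e'
    obtain ⟨p, hp, f⟩ := key h L hL hn u ⟨ha.trans hu.1, hu.2.trans hb⟩
    obtain ⟨p', hp', f'⟩ := key h L hL hn u' ⟨ha.trans hu'.1, hu'.2.trans hb⟩
    exact hun u hu u' hu' (by rw [f, e, mul_zero]) (by rw [f', e', mul_zero])
  have c1 := cneg h1 L1 H1 hn1 hneg1
  have c2 := cneg h2 L2 H2 hn2 hneg2
  -- find the component of `L1 a - β`
  obtain ⟨k, hk⟩ : ∃ k : ℤ, L1 a - β ∈ Ico (Real.pi / 2 + 2 * Real.pi * k) (Real.pi / 2 + 2 * Real.pi * k + 2 * Real.pi) := by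
    refine ⟨⌊(L1 a - β - Real.pi / 2) / (2 * Real.pi)⌋, ?_, ?_⟩
    · have := Int.floor_le ((L1 a - β - Real.pi / 2) / (2 * Real.pi))
      rw [le_div_iff₀ (by positivity)] at this
      linarith
    · have := Int.lt_floor_add_one ((L1 a - β - Real.pi / 2) / (2 * Real.pi))
      rw [div_lt_iff₀ (by positivity)] at this
      linarith
  set c := Real.pi / 2 + 2 * Real.pi * k with hcdef
  have hper : ∀ x : ℝ, Real.cos (x - 2 * Real.pi * k) = Real.cos x := by
    intro x
    rw [mul_comm]; exact Real.cos_sub_int_mul_two_pi x k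
  have hc0 : Real.cos c = 0 := by
    rw [← hper c, hcdef]; simp
  have hx1 : L1 a - β ∈ Ioo c (c + Real.pi) := by
    constructor
    · rcases eq_or_lt_of_le hk.1 with h | h
      · rw [← h, hc0] at c1; exact absurd c1 (lt_irrefl _)
      · exact h
    · by_contra hcon
      push Not at hcon
      have := Real.cos_nonneg_of_neg_pi_div_two_le_of_le
        (x := L1 a - β - 2 * Real.pi * k - 2 * Real.pi) (by linarith) (by linarith [hk.2])
      rw [Real.cos_sub_two_pi, hper] at this
      linarith
  have hab2 := abs_lt.1 hEa
  have hx2 : L2 a - β ∈ Ioo c (c + Real.pi) := by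
    constructor
    · by_contra hcon
      push Not at hcon
      have := Real.cos_nonneg_of_neg_pi_div_two_le_of_le
        (x := L2 a - β - 2 * Real.pi * k) (by linarith [hx1.1]) (by linarith)
      rw [hper] at this
      linarith
    · by_contra hcon
      push Not at hcon
      have := Real.cos_nonneg_of_neg_pi_div_two_le_of_le
        (x := L2 a - β - 2 * Real.pi * k - 2 * Real.pi) (by linarith) (by linarith [hx1.2])
      rw [Real.cos_sub_two_pi, hper] at this
      linarith
  have w1 := window (fun u => L1 u - β) (H1.1.sub continuous_const) a b hab c hc0
    (cuniq h1 L1 H1 hn1 hu1) hx1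
  have w2 := window (fun u => L2 u - β) (H2.1.sub continuous_const) a b hab c hc0
    (cuniq h2 L2 H2 hn2 hu2) hx2
  simp only [mem_Ioo] at w1 w2
  rw [abs_lt]
  constructor
  · by_contra hcon
    push Not at hcon
    have := Real.cos_nonpos_of_pi_div_two_le_of_le
      (x := L1 b - L2 b + 2 * Real.pi + 2 * Real.pi) (by linarith) (by linarith)
    rw [Real.cos_add_two_pi, Real.cos_add_two_pi] at this
    linarith
  · by_contra hcon
    push Not at hcon
    have := Real.cos_nonpos_of_pi_div_two_le_of_le
      (x := L1 b - L2 b - 2 * Real.pi) (by linarith) (by linarith)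
    rw [Real.cos_sub_two_pi] at this
    linarith

open Filter Topology in
theorem ev_close (H : ℝ → ℝ → ℂ) (hH : Continuous (fun q : ℝ × ℝ => H q.1 q.2)) (s0 : ℝ)
    (K : Set ℝ) (hK : IsCompact K) (hne : ∀ u ∈ K, H s0 u ≠ 0) :
    ∃ ε > 0, ∀ s1 s2, |s1 - s0| < ε → |s2 - s0| < ε → ∀ u ∈ K,
      ‖H s1 u - H s2 u‖ < ‖H s2 u‖ := by
  have h := hK.eventually_forall_of_forall_eventually (x₀ := ((s0, s0) : ℝ × ℝ))
    (P := fun (p : ℝ × ℝ) (u : ℝ) => ‖H p.1 u - H p.2 u‖ < ‖H p.2 u‖) (by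
      intro u hu
      have c1 : Continuous (fun z : (ℝ × ℝ) × ℝ => H z.1.1 z.2) :=
        hH.comp (f := fun z : (ℝ × ℝ) × ℝ => (z.1.1, z.2)) (by fun_prop)
      have c2 : Continuous (fun z : (ℝ × ℝ) × ℝ => H z.1.2 z.2) :=
        hH.comp (f := fun z : (ℝ × ℝ) × ℝ => (z.1.2, z.2)) (by fun_prop)
      refine (isOpen_lt (c1.sub c2).norm c2.norm).mem_nhds ?_
      simpa using hne u hu)
  obtain ⟨ε, hε, hb⟩ := Metric.eventually_nhds_iff.1 h
  refine ⟨ε, hε, fun s1 s2 h1 h2 u hu => ?_⟩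
  refine hb (y := (s1, s2)) ?_ u hu
  rw [Prod.dist_eq]
  exact max_lt (by rwa [Real.dist_eq]) (by rwa [Real.dist_eq])

theorem contOn_eps (Φ : ℝ → ℝ) (hΦ : ContinuousOn Φ (Icc 0 1)) (s0 : ℝ) (h0 : s0 ∈ Icc (0:ℝ) 1) :
    ∃ ε > 0, ∀ s1 ∈ Icc (0:ℝ) 1, ∀ s2 ∈ Icc (0:ℝ) 1, |s1 - s0| < ε → |s2 - s0| < ε →
      |Φ s1 - Φ s2| < Real.pi / 2 := by
  obtain ⟨ε, hε, h⟩ := Metric.continuousOn_iff.1 hΦ s0 h0 (Real.pi / 4) (by positivity)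
  refine ⟨ε, hε, fun s1 m1 s2 m2 h1 h2 => ?_⟩
  have a1 := h s1 m1 (by rwa [Real.dist_eq])
  have a2 := h s2 m2 (by rwa [Real.dist_eq])
  rw [Real.dist_eq] at a1 a2
  rw [abs_lt] at *
  constructor <;> linarith

open Filter Topology in
theorem top_count (H : ℝ → ℝ → ℂ) (hH : Continuous (fun q : ℝ × ℝ => H q.1 q.2)) (S : Finset ℝ)
    (hS01 : ∀ s ∈ S, s ∈ Ioo (0:ℝ) 1)
    (hS : ∀ s ∈ Icc (0:ℝ) 1, s ∉ S → ∀ u ∈ Icc (0:ℝ) 1, H s u ≠ 0)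
    (hsing : ∀ s0 ∈ S, ∃ u0 ∈ Ioo (0:ℝ) 1, (∀ u ∈ Icc (0:ℝ) 1, u ≠ u0 → H s0 u ≠ 0) ∧
      ∃ v : ℂ, v ≠ 0 ∧ ∃ η > 0, (∀ u ∈ Ioo (u0 - η) u0, (H s0 u * (starRingEnd ℂ) v).re < 0) ∧
        ∀ s, |s - s0| < η → s ∈ Icc (0:ℝ) 1 → ∀ u ∈ Ioo (u0 - η) (u0 + η),
          ∀ u' ∈ Ioo (u0 - η) (u0 + η), (H s u * (starRingEnd ℂ) v).re = 0 →
            (H s u' * (starRingEnd ℂ) v).re = 0 → u = u')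
    (θ Φ : ℝ → ℝ) (hθ : ContinuousOn θ (Icc 0 1)) (hΦ : ContinuousOn Φ (Icc 0 1))
    (lθ : ∀ s ∈ Icc (0:ℝ) 1, H s 0 = (‖H s 0‖ : ℂ) * Complex.exp ((θ s : ℂ) * Complex.I))
    (lΦ : ∀ s ∈ Icc (0:ℝ) 1, H s 1 = (‖H s 1‖ : ℂ) * Complex.exp ((Φ s : ℂ) * Complex.I))
    (n0 n1 : ℤ)
    (h0 : ∃ L, IsLift (H 0) L ∧ L 0 = θ 0 ∧ L 1 = Φ 0 + 2 * Real.pi * n0)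
    (h1 : ∃ L, IsLift (H 1) L ∧ L 0 = θ 1 ∧ L 1 = Φ 1 + 2 * Real.pi * n1) :
    |n0 - n1| ≤ (S.card : ℤ) := by
  have hpi := Real.pi_pos
  have hex : ∀ s : ℝ, ∃ L n, s ∈ Icc (0:ℝ) 1 → s ∉ S →
      IsLift (H s) L ∧ L 0 = θ s ∧ L 1 = Φ s + 2 * Real.pi * (n : ℤ) := by
    intro s
    by_cases hs : s ∈ Icc (0:ℝ) 1 ∧ s ∉ S
    · obtain ⟨L, hL, e⟩ := exists_isLift (H s)
        (hH.comp (f := fun u : ℝ => (s, u)) (by fun_prop)) (hS s hs.1 hs.2) (θ s) (lθ s hs.1)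
      obtain ⟨n, hn⟩ := lift_diff _ (hS s hs.1 hs.2 1 (by simp)) _ _ (hL.2 1 (by simp)) (lΦ s hs.1)
      exact ⟨L, n, fun _ _ => ⟨hL, e, hn⟩⟩
    · exact ⟨fun _ => 0, 0, fun a b => absurd ⟨a, b⟩ hs⟩
  choose L N hLN using hex
  have z0 : (0:ℝ) ∉ S := fun h => lt_irrefl _ (hS01 0 h).1
  have z1 : (1:ℝ) ∉ S := fun h => lt_irrefl _ (hS01 1 h).2
  have intlem : ∀ (m : ℤ) (c : ℤ), |2 * Real.pi * (m:ℝ)| < 2 * Real.pi * (c:ℝ) → |m| < c := by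
    intro m c h
    rw [abs_mul, abs_of_pos (by positivity)] at h
    have := lt_of_mul_lt_mul_left h (by positivity)
    exact_mod_cast this
  have huniq : ∀ s ∈ Icc (0:ℝ) 1, s ∉ S → ∀ n : ℤ,
      (∃ L, IsLift (H s) L ∧ L 0 = θ s ∧ L 1 = Φ s + 2 * Real.pi * n) → N s = n := by
    rintro s hs hsS n ⟨L', hL', e0, e1⟩
    obtain ⟨q, q0, q1⟩ := hLN s hs hsS
    have := pair_close (H s) (H s) (L s) L' q hL' 0 1 le_rfl zero_le_one le_rfl _
      Real.cos_pi_div_two (by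
        intro u hu; simpa using hS s hs hsS u hu) (by rw [q0, e0]; simp; positivity)
    rw [q1, e1] at this
    have h2 := intlem (N s - n) 1 (by
      push_cast
      rw [show 2 * Real.pi * ((N s : ℝ) - n) = Φ s + 2 * Real.pi * N s - (Φ s + 2 * Real.pi * n) by ring]
      linarith)
    rw [Int.abs_lt_one_iff] at h2
    omega
  rw [← huniq 0 (by simp) z0 n0 h0, ← huniq 1 (by simp) z1 n1 h1]
  have main := jump_count N S ?_ ?_ _ 0 1 le_rfl zero_le_one le_rfl z0 z1 rfl
  · refine main.trans ?_
    exact_mod_cast Finset.card_filter_le _ _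
  · intro s0 hs0 hs0S
    obtain ⟨ε1, he1, k1⟩ := contOn_eps θ hθ s0 hs0
    obtain ⟨ε2, he2, k2⟩ := contOn_eps Φ hΦ s0 hs0
    obtain ⟨ε3, he3, k3⟩ := ev_close H hH s0 (Icc 0 1) isCompact_Icc (hS s0 hs0 hs0S)
    have hSc : ((S : Finset ℝ) : Set ℝ)ᶜ ∈ 𝓝 s0 :=
      (Finset.finite_toSet S).isClosed.isOpen_compl.mem_nhds (by simpa using hs0S)
    filter_upwards [Metric.ball_mem_nhds s0 he1, Metric.ball_mem_nhds s0 he2,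
      Metric.ball_mem_nhds s0 he3, hSc] with s b1 b2 b3 b4 hs
    rw [Metric.mem_ball, Real.dist_eq] at b1 b2 b3
    have b4 : s ∉ S := by simpa using b4
    obtain ⟨q, q0, q1⟩ := hLN s hs b4
    obtain ⟨r, r0, r1⟩ := hLN s0 hs0 hs0S
    have A := pair_close (H s) (H s0) (L s) (L s0) q r 0 1 le_rfl zero_le_one le_rfl _
      Real.cos_pi_div_two (k3 s s0 b3 (by simpa using he3)) (by
        rw [q0, r0]; exact k1 s hs s0 hs0 b1 (by simpa using he1))
    have B := k2 s hs s0 hs0 b2 (by simpa using he2)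
    rw [q1, r1] at A
    have h2 := intlem (N s - N s0) 1 (by
      push_cast
      rw [abs_lt] at A B ⊢
      constructor <;> linarith)
    rw [Int.abs_lt_one_iff] at h2
    omega
  · intro s0 hs0S
    have hs0 : s0 ∈ Icc (0:ℝ) 1 := Ioo_subset_Icc_self (hS01 s0 hs0S)
    obtain ⟨u0, hu0, hne, v, hv, η, hη, hneg, hun⟩ := hsing s0 hs0S
    obtain ⟨ε1, he1, k1⟩ := contOn_eps θ hθ s0 hs0
    obtain ⟨ε2, he2, k2⟩ := contOn_eps Φ hΦ s0 hs0
    obtain ⟨r, hr, hr1, hr2, hr3⟩ : ∃ r > 0, r < η ∧ r < u0 ∧ r < 1 - u0 := by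
      have h : 0 < min η (min u0 (1 - u0)) :=
        lt_min hη (lt_min hu0.1 (by linarith [hu0.2]))
      refine ⟨_, half_pos h, ?_, ?_, ?_⟩ <;>
      · refine (half_lt_self h).trans_le ?_
        simp
    obtain ⟨ε3, he3, k3⟩ := ev_close H hH s0 (Icc 0 (u0 - r)) isCompact_Icc (by
      intro u hu; exact hne u ⟨hu.1, by linarith [hu.2]⟩ (by linarith [hu.2]))
    obtain ⟨ε4, he4, k4⟩ := ev_close H hH s0 (Icc (u0 + r) 1) isCompact_Icc (by
      intro u hu; exact hne u ⟨by linarith [hu.1], hu.2⟩ (by linarith [hu.1]))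
    obtain ⟨ε5, he5, k5⟩ : ∃ ε > 0, ∀ s, |s - s0| < ε →
        (H s (u0 - r) * (starRingEnd ℂ) v).re < 0 := by
      have hc : Continuous (fun s => (H s (u0 - r) * (starRingEnd ℂ) v).re) := by
        have : Continuous (fun s => H s (u0 - r)) :=
          hH.comp (f := fun s : ℝ => (s, u0 - r)) (by fun_prop)
        fun_prop
      have := (isOpen_lt hc continuous_const).mem_nhds
        (hneg (u0 - r) ⟨by linarith, by linarith⟩ : s0 ∈ {s | _ < (0:ℝ)})
      obtain ⟨ε, hε, h⟩ := Metric.mem_nhds_iff.1 this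
      exact ⟨ε, hε, fun s hs => h (by rwa [Metric.mem_ball, Real.dist_eq])⟩
    refine ⟨min (min ε1 ε2) (min (min ε3 ε4) (min ε5 η)), by positivity, ?_⟩
    intro s1 s2 d1 d2 m1 m2 o1 o2
    simp only [lt_min_iff] at d1 d2
    obtain ⟨q, q0, q1⟩ := hLN s1 m1 o1
    obtain ⟨r, r0, r1⟩ := hLN s2 m2 o2
    have A := pair_window (H s1) (H s2) (L s1) (L s2) q r (hS s1 m1 o1) (hS s2 m2 o2)
      _ _ (by linarith) (by linarith) (by linarith)
      (k3 s1 s2 d1.2.1.1 d2.2.1.1) (k4 s1 s2 d1.2.1.2 d2.2.1.2)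
      (by rw [q0, r0]; exact k1 s1 m1 s2 m2 d1.1.1 d2.1.1) v hv
      (k5 s1 d1.2.2.1) (k5 s2 d2.2.2.1)
      (fun u hu u' hu' => hun s1 d1.2.2.2 m1 u ⟨by linarith [hu.1], by linarith [hu.2]⟩
        u' ⟨by linarith [hu'.1], by linarith [hu'.2]⟩)
      (fun u hu u' hu' => hun s2 d2.2.2.2 m2 u ⟨by linarith [hu.1], by linarith [hu.2]⟩
        u' ⟨by linarith [hu'.1], by linarith [hu'.2]⟩)
    have B := k2 s1 m1 s2 m2 d1.1.2 d2.1.2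
    rw [q1, r1] at A
    have h2 := intlem (N s1 - N s2) 2 (by
      push_cast
      rw [abs_lt] at A B ⊢
      constructor <;> linarith)
    omega


/-- The averaged difference quotient. -/
def KK (f : ℝ → ℂ) (s t : ℝ) : ℂ := ∫ u in (0:ℝ)..1, deriv f (s + u * (t - s))

/-- The extended chord direction. -/
def GG (f : ℝ → ℂ) (s t : ℝ) : ℂ := if t - s ≤ 1 / 2 then KK f s t else - KK f s (t - 1)

theorem KK_spec (f : ℝ → ℂ) (hsm : ContDiff ℝ 1 f) (s t : ℝ) :
    f t - f s = ((t - s : ℝ) : ℂ) * KK f s t := by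
  have hdc : Continuous (deriv f) := hsm.continuous_deriv le_rfl
  have hdiff : Differentiable ℝ f := hsm.differentiable (by norm_num)
  have h : ∀ u ∈ uIcc (0:ℝ) 1, HasDerivAt (fun u => f (s + u * (t - s)))
      (((t - s : ℝ)) • deriv f (s + u * (t - s))) u := by
    intro u _
    have h1 : HasDerivAt (fun u : ℝ => s + u * (t - s)) (t - s) u := by
      simpa using ((hasDerivAt_id u).mul_const (t - s)).const_add s
    exact (hdiff _).hasDerivAt.scomp u h1
  have := intervalIntegral.integral_eq_sub_of_hasDerivAt h (by
    apply Continuous.intervalIntegrable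
    fun_prop)
  rw [intervalIntegral.integral_smul] at this
  simp at this
  rw [KK, ← this]
  simp

theorem KK_diag (f : ℝ → ℂ) (s : ℝ) : KK f s s = deriv f s := by
  simp [KK]

theorem KK_cont (f : ℝ → ℂ) (hsm : ContDiff ℝ 1 f) :
    Continuous (fun q : ℝ × ℝ => KK f q.1 q.2) := by
  have hdc : Continuous (deriv f) := hsm.continuous_deriv le_rfl
  unfold KK
  apply intervalIntegral.continuous_parametric_intervalIntegral_of_continuous'
  fun_prop

theorem GG_cont (f : ℝ → ℂ) (hsm : ContDiff ℝ 1 f) (hper : Function.Periodic f 1) :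
    Continuous (fun q : ℝ × ℝ => GG f q.1 q.2) := by
  unfold GG
  have hk := KK_cont f hsm
  refine Continuous.if_le hk ?_ (by fun_prop) (by fun_prop) ?_
  · exact (hk.comp (f := fun q : ℝ × ℝ => (q.1, q.2 - 1)) (by fun_prop)).neg
  · rintro ⟨s, t⟩ h
    simp only at h ⊢
    have h1 := KK_spec f hsm s t
    have h2 := KK_spec f hsm s (t - 1)
    rw [show f (t - 1) = f t by rw [hper.sub_eq], h1, show t - 1 - s = -(t - s) by linarith, h] at h2
    have : ((1 / 2 : ℝ) : ℂ) ≠ 0 := by norm_num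
    apply mul_left_cancel₀ this
    rw [h2]; push_cast; ring

theorem GG_spec (f : ℝ → ℂ) (hsm : ContDiff ℝ 1 f) (hper : Function.Periodic f 1) (s t : ℝ)
    (h0 : 0 < t - s) (h1 : t - s < 1) : ∃ m : ℝ, 0 < m ∧ f t - f s = (m : ℂ) * GG f s t := by
  unfold GG
  split_ifs with h
  · exact ⟨t - s, h0, KK_spec f hsm s t⟩
  · refine ⟨1 - (t - s), by linarith, ?_⟩
    have h2 := KK_spec f hsm s (t - 1)
    rw [show f (t - 1) = f t by rw [hper.sub_eq]] at h2
    rw [h2]; push_cast; ring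

theorem GG_diag (f : ℝ → ℂ) (s : ℝ) : GG f s s = deriv f s := by
  rw [GG, if_pos (by norm_num), KK_diag]

theorem GG_corner (f : ℝ → ℂ) : GG f 0 1 = - deriv f 0 := by
  rw [GG, if_neg (by norm_num)]
  simp [KK_diag]

theorem arg_cont (g : ℝ → ℂ) (hc : Continuous g)
    (h : ∀ u ∈ Icc (0:ℝ) 1, 0 ≤ (g u).im ∧ g u ≠ 0) :
    ∃ A : ℝ → ℝ, Continuous A ∧ ∀ u ∈ Icc (0:ℝ) 1, A u = Complex.arg (g u) := by
  refine ⟨fun u => Complex.arg (g (projIcc 0 1 zero_le_one u)), ?_, ?_⟩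
  · have hg : Continuous (fun u : ℝ => g (projIcc 0 1 zero_le_one u)) :=
      hc.comp (continuous_subtype_val.comp continuous_projIcc)
    rw [continuous_iff_continuousAt]
    intro x
    have hx := h _ (projIcc 0 1 zero_le_one x).2
    by_cases hs : g (projIcc 0 1 zero_le_one x) ∈ Complex.slitPlane
    · exact (Complex.continuousAt_arg hs).comp (f := fun u : ℝ => g (projIcc 0 1 zero_le_one u))
        hg.continuousAt
    · rw [Complex.mem_slitPlane_iff] at hs
      push Not at hs
      have him := hs.2
      have hre : (g (projIcc 0 1 zero_le_one x)).re < 0 := by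
        refine lt_of_le_of_ne hs.1 (fun e => hx.2 (Complex.ext e him))
      have := Complex.continuousWithinAt_arg_of_re_neg_of_im_zero hre him
      rw [← continuousWithinAt_univ]
      exact this.comp (f := fun u : ℝ => g (projIcc 0 1 zero_le_one u))
        hg.continuousAt.continuousWithinAt (fun u _ => (h _ (projIcc 0 1 zero_le_one u).2).1)
  · intro u hu
    simp only [projIcc_of_mem _ hu]

theorem core (f : ℝ → ℂ) (hper : Function.Periodic f 1) (hsm : ContDiff ℝ 1 f)
    (hd : ∀ t, deriv f t ≠ 0) (h0 : 0 < (deriv f 0).re) (him : ∀ t, (f 0).im ≤ (f t).im)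
    (hb : ∀ t ∈ Ioo (0:ℝ) 1, f t ≠ f 0) (S : Finset ℝ)
    (hS : ∀ s, s ∈ S ↔ s ∈ Ioo (0:ℝ) 1 ∧ ∃ t ∈ Ioo s 1, f s = f t)
    (huniq : ∀ s ∈ S, ∀ t ∈ Ioo s 1, ∀ t' ∈ Ioo s 1, f s = f t → f s = f t' → t = t')
    (θ : ℝ → ℝ) (hθ : Continuous θ)
    (lθ : ∀ t, deriv f t = (‖deriv f t‖ : ℂ) * Complex.exp ((θ t : ℂ) * Complex.I)) (ω : ℤ)
    (hω : θ 1 - θ 0 = 2 * Real.pi * ω) : |1 - ω| ≤ (S.card : ℤ) := by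
  have hpi := Real.pi_pos
  have hdc : Continuous (deriv f) := hsm.continuous_deriv le_rfl
  have hdiff : Differentiable ℝ f := hsm.differentiable (by norm_num)
  have hG := GG_cont f hsm hper
  have f10 : f 1 = f 0 := by simpa using hper 0
  have dim0 : (deriv f 0).im = 0 := by
    have h1 : HasDerivAt (fun t => (f t).im) (deriv f 0).im 0 :=
      Complex.imCLM.hasFDerivAt.comp_hasDerivAt (0:ℝ) (hdiff 0).hasDerivAt
    have h2 : IsLocalMin (fun t => (f t).im) 0 := Filter.Eventually.of_forall him
    exact h2.hasDerivAt_eq_zero h1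
  have d1 : deriv f 1 = deriv f 0 := by
    have : deriv (fun x => f (x + 1)) 0 = deriv f (0 + 1) := deriv_comp_add_const f 1 0
    rw [zero_add] at this
    rw [← this]
    congr 1
    funext x; exact hper x
  have Gz : ∀ s t, 0 ≤ s → s ≤ t → t ≤ 1 → GG f s t = 0 →
      s ∈ Ioo (0:ℝ) 1 ∧ t ∈ Ioo s 1 ∧ f s = f t := by
    intro s t hs hst ht hz
    rcases eq_or_lt_of_le hst with rfl | hst
    · rw [GG_diag] at hz; exact absurd hz (hd s)
    by_cases hc : t - s < 1
    · obtain ⟨m, hm, e⟩ := GG_spec f hsm hper s t (by linarith) hc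
      rw [hz, mul_zero, sub_eq_zero] at e
      rcases eq_or_lt_of_le hs with rfl | hs
      · exact absurd e (hb t ⟨hst, by linarith⟩)
      rcases eq_or_lt_of_le ht with rfl | ht
      · exact absurd (e.symm.trans f10) (hb s ⟨hs, hst⟩)
      exact ⟨⟨hs, by linarith⟩, ⟨hst, ht⟩, e.symm⟩
    · have e1 : s = 0 := by linarith
      have e2 : t = 1 := by linarith
      subst e1 e2
      rw [GG_corner, neg_eq_zero] at hz
      exact absurd hz (hd 0)
  set H : ℝ → ℝ → ℂ := fun s u => GG f s (s + u * (1 - s)) with hHdef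
  have hH : Continuous (fun q : ℝ × ℝ => H q.1 q.2) :=
    hG.comp (f := fun q : ℝ × ℝ => (q.1, q.1 + q.2 * (1 - q.1))) (by fun_prop)
  have tr : ∀ s ∈ Icc (0:ℝ) 1, ∀ u ∈ Icc (0:ℝ) 1, s ≤ s + u * (1 - s) ∧ s + u * (1 - s) ≤ 1 := by
    intro s hs u hu
    have a1 : 0 ≤ 1 - s := by linarith [hs.2]
    have a2 : 0 ≤ 1 - u := by linarith [hu.2]
    constructor
    · nlinarith [mul_nonneg hu.1 a1]
    · nlinarith [mul_nonneg a2 a1]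
  have Hs0 : ∀ s, H s 0 = deriv f s := by intro s; simp [hHdef, GG_diag]
  have Hs1 : ∀ s, H s 1 = GG f s 1 := by intro s; simp [hHdef]
  -- the final side
  have gside : ∀ s ∈ Icc (0:ℝ) 1, 0 ≤ (-GG f s 1).im ∧ -GG f s 1 ≠ 0 := by
    intro s hs
    refine ⟨?_, fun h => ?_⟩
    · rcases eq_or_lt_of_le hs.1 with rfl | hs0
      · rw [GG_corner]; simp [dim0]
      rcases eq_or_lt_of_le hs.2 with rfl | hs1
      · rw [GG_diag, d1]; simp [dim0]
      obtain ⟨m, hm, e⟩ := GG_spec f hsm hper s 1 (by linarith) (by linarith)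
      have e' := congrArg Complex.im e
      rw [Complex.im_ofReal_mul, f10, Complex.sub_im] at e'
      rw [Complex.neg_im]
      have := him s
      by_contra hcon
      push Not at hcon
      have : 0 < m * (GG f s 1).im := mul_pos hm (by linarith)
      linarith
    · have := Gz s 1 hs.1 hs.2 le_rfl (neg_eq_zero.1 h)
      exact lt_irrefl _ this.2.1.2
  obtain ⟨Φ0, hΦ0, eΦ0⟩ := arg_cont (fun s => -GG f s 1)
    (hG.comp (f := fun s : ℝ => (s, 1)) (by fun_prop)).neg gside
  have gbot : ∀ u ∈ Icc (0:ℝ) 1, 0 ≤ (GG f 0 u).im ∧ GG f 0 u ≠ 0 := by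
    intro u hu
    refine ⟨?_, fun h => ?_⟩
    · rcases eq_or_lt_of_le hu.1 with rfl | hs0
      · rw [GG_diag, dim0]
      rcases eq_or_lt_of_le hu.2 with rfl | hs1
      · rw [GG_corner]; simp [dim0]
      obtain ⟨m, hm, e⟩ := GG_spec f hsm hper 0 u (by linarith) (by linarith)
      have e' := congrArg Complex.im e
      rw [Complex.im_ofReal_mul, Complex.sub_im] at e'
      have := him u
      by_contra hcon
      push Not at hcon
      have : m * (GG f 0 u).im < 0 := mul_neg_of_pos_of_neg hm hcon
      linarith
    · have := Gz 0 u le_rfl hu.1 hu.2 h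
      exact lt_irrefl _ this.1.1
  obtain ⟨A, hA, eA⟩ := arg_cont (fun u => GG f 0 u)
    (hG.comp (f := fun u : ℝ => (0, u)) (by fun_prop)) gbot
  have d0r : deriv f 0 = (((deriv f 0).re : ℝ) : ℂ) := Complex.ext (by simp) (by simp [dim0])
  have arg0 : Complex.arg (deriv f 0) = 0 := by
    rw [d0r]; exact Complex.arg_ofReal_of_nonneg h0.le
  have arg1 : Complex.arg (-deriv f 0) = Real.pi := by
    rw [d0r, ← Complex.ofReal_neg]; exact Complex.arg_ofReal_of_neg (by linarith)
  have argl : ∀ z : ℂ, z = (‖z‖ : ℂ) * Complex.exp ((Complex.arg z : ℂ) * Complex.I) :=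
    fun z => (Complex.norm_mul_exp_arg_mul_I z).symm
  obtain ⟨k, hk⟩ := lift_diff (deriv f 0) (hd 0) _ _ (lθ 0) (argl _)
  rw [arg0, zero_add] at hk
  have hexpk : ∀ x : ℝ, Complex.exp (((x + 2 * Real.pi * k : ℝ) : ℂ) * Complex.I) =
      Complex.exp ((x : ℂ) * Complex.I) := by
    intro x
    rw [Complex.exp_eq_exp_iff_exists_int]
    exact ⟨k, by push_cast; ring⟩
  have := top_count H hH S (fun s hs => ((hS s).1 hs).1) ?_ ?_ θ (fun s => Real.pi + Φ0 s)
    hθ.continuousOn (by fun_prop) ?_ ?_ k (ω + k - 1) ?_ ?_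
  · rwa [show k - (ω + k - 1) = 1 - ω by ring] at this
  · intro s hs hsS u hu hz
    obtain ⟨a1, a2, a3⟩ := Gz s _ hs.1 (tr s hs u hu).1 (tr s hs u hu).2 hz
    exact hsS ((hS s).2 ⟨a1, _, a2, a3⟩)
  · intro s0 hs0
    obtain ⟨hs01, t0, ht0, e0⟩ := (hS s0).1 hs0
    have hpos : 0 < 1 - s0 := by linarith [hs01.2]
    set u0 := (t0 - s0) / (1 - s0) with hu0def
    have hu0t : s0 + u0 * (1 - s0) = t0 := by
      rw [hu0def, div_mul_cancel₀ _ hpos.ne']; ring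
    refine ⟨u0, ⟨div_pos (by linarith [ht0.1]) hpos, (div_lt_one hpos).2 (by linarith [ht0.2])⟩,
      ?_, deriv f t0, hd t0, ?_⟩
    · intro u hu hne hz
      have hs0I : s0 ∈ Icc (0:ℝ) 1 := Ioo_subset_Icc_self hs01
      obtain ⟨a1, a2, a3⟩ := Gz s0 _ hs0I.1 (tr s0 hs0I u hu).1 (tr s0 hs0I u hu).2 hz
      have := huniq s0 hs0 _ a2 t0 ht0 a3 e0
      apply hne
      rw [← hu0t] at this
      exact mul_right_cancel₀ hpos.ne' (add_left_cancel this)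
    · set v := deriv f t0
      have hcont : Continuous (fun t => (deriv f t * (starRingEnd ℂ) v).re) := by fun_prop
      have hvpos : 0 < (deriv f t0 * (starRingEnd ℂ) v).re := by
        change 0 < (v * (starRingEnd ℂ) v).re
        rw [Complex.mul_conj, Complex.ofReal_re]
        exact Complex.normSq_pos.2 (hd t0)
      obtain ⟨ρ, hρ, hball⟩ := Metric.mem_nhds_iff.1
        ((isOpen_lt continuous_const hcont).mem_nhds hvpos)
      have hmono : ∀ s, StrictMonoOn (fun t => ((f t - f s) * (starRingEnd ℂ) v).re)
          (Ioo (t0 - ρ) (t0 + ρ)) := by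
        intro s
        have hda : ∀ t, HasDerivAt (fun t => ((f t - f s) * (starRingEnd ℂ) v).re)
            (deriv f t * (starRingEnd ℂ) v).re t := by
          intro t
          exact Complex.reCLM.hasFDerivAt.comp_hasDerivAt t
            (((hdiff t).hasDerivAt.sub_const (f s)).mul_const _)
        refine strictMonoOn_of_deriv_pos (convex_Ioo _ _)
          (fun t _ => (hda t).continuousAt.continuousWithinAt) ?_
        intro t ht
        rw [interior_Ioo] at ht
        rw [(hda t).deriv]
        apply hball
        rw [Metric.mem_ball, Real.dist_eq, abs_lt]
        constructor <;> linarith [ht.1, ht.2]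
      have hopen : IsOpen {q : ℝ × ℝ | t0 - ρ < q.1 + q.2 * (1 - q.1) ∧
          q.1 + q.2 * (1 - q.1) < t0 + ρ ∧ 0 < q.2 * (1 - q.1) ∧ q.2 * (1 - q.1) < 1 ∧ q.1 < 1} := by
        have c1 : Continuous (fun q : ℝ × ℝ => q.1 + q.2 * (1 - q.1)) := by fun_prop
        have c2 : Continuous (fun q : ℝ × ℝ => q.2 * (1 - q.1)) := by fun_prop
        exact (isOpen_lt continuous_const c1).inter ((isOpen_lt c1 continuous_const).inter
          ((isOpen_lt continuous_const c2).inter ((isOpen_lt c2 continuous_const).inter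
          (isOpen_lt continuous_fst continuous_const))))
      obtain ⟨η, hη, hηb⟩ := Metric.mem_nhds_iff.1 (hopen.mem_nhds
        (show (s0, u0) ∈ _ by
          have : u0 * (1 - s0) = t0 - s0 := by linarith
          simp only [mem_ofPred_eq]
          rw [hu0t, this]
          refine ⟨by linarith, by linarith, by linarith [ht0.1], by linarith [ht0.2, hs01.1], hs01.2⟩))
      have hloc : ∀ s u, |s - s0| < η → u ∈ Ioo (u0 - η) (u0 + η) →
          t0 - ρ < s + u * (1 - s) ∧
          s + u * (1 - s) < t0 + ρ ∧ 0 < u * (1 - s) ∧ u * (1 - s) < 1 ∧ s < 1 := by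
        intro s u h1 h2
        apply hηb (a := (s, u))
        rw [Metric.mem_ball, Prod.dist_eq]
        refine max_lt (by rwa [Real.dist_eq]) ?_
        rw [Real.dist_eq, abs_lt]
        constructor <;> linarith [h2.1, h2.2]
      have hrel : ∀ s u, |s - s0| < η → u ∈ Ioo (u0 - η) (u0 + η) → ∃ m : ℝ, 0 < m ∧
          ((f (s + u * (1 - s)) - f s) * (starRingEnd ℂ) v).re = m * (H s u * (starRingEnd ℂ) v).re := by
        intro s u h1 h2
        obtain ⟨_, _, b3, b4, _⟩ := hloc s u h1 h2
        obtain ⟨m, hm, e⟩ := GG_spec f hsm hper s (s + u * (1 - s)) (by linarith) (by linarith)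
        refine ⟨m, hm, ?_⟩
        rw [e, mul_assoc, Complex.re_ofReal_mul]
      refine ⟨η, hη, ?_, ?_⟩
      · intro u hu
        have hu' : u ∈ Ioo (u0 - η) (u0 + η) := ⟨hu.1, by linarith [hu.2]⟩
        have hs' : |s0 - s0| < η := by simpa using hη
        obtain ⟨m, hm, e⟩ := hrel s0 u hs' hu'
        obtain ⟨b1, b2, _⟩ := hloc s0 u hs' hu'
        have hlt : s0 + u * (1 - s0) < t0 := by
          rw [← hu0t]
          linarith [mul_lt_mul_of_pos_right hu.2 hpos]
        have := hmono s0 ⟨b1, b2⟩ (show t0 ∈ Ioo (t0 - ρ) (t0 + ρ) from ⟨by linarith, by linarith⟩) hlt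
        simp only at this
        rw [e, ← e0] at this
        simp only [sub_self, zero_mul, Complex.zero_re] at this
        by_contra hcon
        push Not at hcon
        have := mul_nonneg hm.le hcon
        linarith
      · intro s hs hs1 u hu u' hu' z z'
        obtain ⟨m, hm, e⟩ := hrel s u hs hu
        obtain ⟨m', hm', e'⟩ := hrel s u' hs hu'
        obtain ⟨b1, b2, _, _, b5⟩ := hloc s u hs hu
        obtain ⟨b1', b2', _⟩ := hloc s u' hs hu'
        rw [z, mul_zero] at e
        rw [z', mul_zero] at e'
        have := (hmono s).injOn ⟨b1, b2⟩ ⟨b1', b2'⟩ (e.trans e'.symm)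
        exact mul_right_cancel₀ (show (1 - s) ≠ 0 by linarith) (add_left_cancel this)
  · intro s _
    rw [Hs0]; exact lθ s
  · intro s hs
    rw [Hs1, eΦ0 s hs]
    have h1 := argl (-GG f s 1)
    rw [norm_neg] at h1
    have h2 : GG f s 1 = - ((‖GG f s 1‖ : ℂ) * Complex.exp ((Complex.arg (-GG f s 1) : ℂ) * Complex.I)) := by
      rw [← h1, neg_neg]
    rw [Complex.ofReal_add, add_mul, Complex.exp_add, Complex.exp_pi_mul_I]
    rw [neg_one_mul, mul_neg]
    exact h2
  · refine ⟨fun u => A u + 2 * Real.pi * k, ⟨by fun_prop, ?_⟩, ?_, ?_⟩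
    · intro u hu
      rw [hexpk, eA u hu]
      have : H 0 u = GG f 0 u := by simp [hHdef]
      rw [this]; exact argl _
    · simp only
      rw [eA 0 (by simp), GG_diag, arg0, hk, zero_add]
    · simp only
      rw [eA 1 (by simp), eΦ0 0 (by simp), GG_corner, neg_neg, arg1, arg0]; ring
  · refine ⟨fun _ => θ 1, ⟨continuous_const, ?_⟩, rfl, ?_⟩
    · intro u _
      have : H 1 u = deriv f 1 := by simp [hHdef, GG_diag]
      rw [this]; exact lθ 1
    · rw [eΦ0 1 (by simp), GG_diag, d1, arg1]
      push_cast
      linarith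


open PlanarCurve

theorem per_fract (f : ℝ → ℂ) (hper : Function.Periodic f 1) (t : ℝ) : f (Int.fract t) = f t := by
  have := hper.sub_int_mul_eq (x := t) ⌊t⌋
  rw [mul_one] at this
  exact this

theorem per_deriv (f : ℝ → ℂ) (hper : Function.Periodic f 1) : Function.Periodic (deriv f) 1 := by
  intro x
  rw [← deriv_comp_add_const]
  congr 1
  funext y; exact hper y

theorem fiber_finite (f : ℝ → ℂ) (hdiff : Differentiable ℝ f) (hd : ∀ t, deriv f t ≠ 0) (p : ℂ) :
    {t ∈ Ico (0:ℝ) 1 | f t = p}.Finite := by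
  by_contra hinf
  obtain ⟨x, _, hx⟩ := Set.Infinite.exists_accPt_of_subset_isCompact hinf (isCompact_Icc (a := (0:ℝ)) (b := 1))
    (fun t ht => Ico_subset_Icc_self ht.1)
  have h1 := (hdiff x).hasDerivAt.eventually_ne (c := p) (hd x)
  rw [accPt_iff_frequently_nhdsNE] at hx
  obtain ⟨y, hy, hy'⟩ := (hx.and_eventually h1).exists
  exact hy' hy.2

theorem fract_inj (b s t : ℝ) (hs : s ∈ Ico (0:ℝ) 1) (ht : t ∈ Ico (0:ℝ) 1)
    (h : Int.fract (s + b) = Int.fract (t + b)) : s = t := by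
  obtain ⟨z, hz⟩ := Int.fract_eq_fract.1 h
  have h1 : s - t = z := by linarith
  have h2 : |(z:ℝ)| < 1 := by
    rw [← h1, abs_lt]; constructor <;> linarith [hs.1, hs.2, ht.1, ht.2]
  have h3 : z = 0 := by
    rw [← Int.abs_lt_one_iff]; exact_mod_cast h2
  rw [h3] at h1; simp at h1; linarith

theorem card_le_mult (f : ℝ → ℂ) (hper : Function.Periodic f 1) (hdiff : Differentiable ℝ f)
    (hd : ∀ t, deriv f t ≠ 0) (b : ℝ) (p : ℂ) (T : Finset ℝ) (hT : ∀ t ∈ T, t ∈ Ico (0:ℝ) 1)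
    (hp : ∀ t ∈ T, f (t + b) = p) : T.card ≤ multF f p := by
  unfold multF
  rw [← Set.ncard_coe_finset]
  refine Set.ncard_le_ncard_of_injOn (fun t => Int.fract (t + b)) ?_ ?_ (fiber_finite f hdiff hd p)
  · intro t ht
    refine ⟨⟨Int.fract_nonneg _, Int.fract_lt_one _⟩, ?_⟩
    rw [per_fract f hper]; exact hp t ht
  · intro s hs t ht h
    exact fract_inj b s t (hT s hs) (hT t ht) h

theorem lower (c : PlanarCurve) (hst : c.Stable) (ω : ℤ) (hW : c.HasWhitney ω) :
    |1 - ω| ≤ (c.crossings : ℤ) ∨ |1 + ω| ≤ (c.crossings : ℤ) := by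
  obtain ⟨f, hper, hsm0, hd⟩ := c
  simp only [Stable, HasWhitney, crossings] at *
  have hsm : ContDiff ℝ 1 f := hsm0.of_le (by norm_cast)
  have hdiff : Differentiable ℝ f := hsm.differentiable (by norm_num)
  obtain ⟨θ, hθ, lθ, hω⟩ := hW
  -- the base point
  obtain ⟨b, -, hbmin⟩ := (isCompact_Icc (a := (0:ℝ)) (b := 1)).exists_isMinOn
    (nonempty_Icc.2 zero_le_one) (Complex.continuous_im.comp hdiff.continuous).continuousOn
  have hmin : ∀ t, (f b).im ≤ (f t).im := by
    intro t
    have := hbmin (show Int.fract t ∈ Icc (0:ℝ) 1 from ⟨Int.fract_nonneg _, (Int.fract_lt_one _).le⟩)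
    simpa [per_fract f hper] using this
  have hmin0 : ∀ x, (f x).im = (f b).im → (deriv f x).im = 0 := by
    intro x hx
    have h1 : HasDerivAt (fun t => (f t).im) (deriv f x).im x :=
      Complex.imCLM.hasFDerivAt.comp_hasDerivAt x (hdiff x).hasDerivAt
    have h2 : IsLocalMin (fun t => (f t).im) x :=
      Filter.Eventually.of_forall (fun t => by beta_reduce; rw [hx]; exact hmin t)
    exact h2.hasDerivAt_eq_zero h1
  have db : (deriv f b).im = 0 := hmin0 b rfl
  have dper := per_deriv f hper
  set g : ℝ → ℂ := fun t => f (t + b) with hg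
  have gd : ∀ t, deriv g t = deriv f (t + b) := fun t => deriv_comp_add_const f b t
  have gper : Function.Periodic g 1 := by
    intro t; simp only [hg]; rw [show t + 1 + b = t + b + 1 by ring, hper]
  have gsm : ContDiff ℝ 1 g := hsm.comp (contDiff_id.add contDiff_const)
  have gdiff : Differentiable ℝ g := gsm.differentiable (by norm_num)
  have g0 : g 0 = f b := by simp [hg]
  have gbase : ∀ t ∈ Ioo (0:ℝ) 1, g t ≠ g 0 := by
    intro t ht he
    have hne : (0:ℝ) ≠ t := ht.1.ne
    have h2 := card_le_mult f hper hdiff hd b (f b) {0, t} (by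
      intro x hx; simp at hx; rcases hx with rfl | rfl
      · simp
      · exact Ioo_subset_Ico_self ht) (by
      intro x hx; simp at hx; rcases hx with rfl | rfl
      · simp
      · rw [← g0]; exact he)
    rw [Finset.card_pair hne] at h2
    have h3 := hst.2 (f b)
    have h4 := h3.2 (le_antisymm h3.1 h2) (Int.fract (0 + b)) ⟨Int.fract_nonneg _, Int.fract_lt_one _⟩
      (Int.fract (t + b)) ⟨Int.fract_nonneg _, Int.fract_lt_one _⟩
      (fun h => hne (fract_inj b 0 t (by simp) (Ioo_subset_Ico_self ht) h))
      (by rw [per_fract f hper, zero_add]) (by rw [per_fract f hper, ← g0]; exact he)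
    apply h4
    rw [per_fract _ dper, per_fract _ dper]
    have e1 := hmin0 (t + b) (by rw [← g0, ← he])
    simp [det2, e1, db]
  set S0 : Set ℝ := {s | s ∈ Ioo (0:ℝ) 1 ∧ ∃ t ∈ Ioo s 1, g s = g t} with hS0
  have hmaps : ∀ s ∈ S0, g s ∈ crossingSetF f := by
    rintro s ⟨hs, t, ht, e⟩
    have h2 := card_le_mult f hper hdiff hd b (g s) {s, t} (by
      intro x hx; simp at hx; rcases hx with rfl | rfl
      · exact Ioo_subset_Ico_self hs
      · exact ⟨by linarith [hs.1, ht.1], ht.2⟩) (by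
      intro x hx; simp at hx; rcases hx with rfl | rfl
      · rfl
      · exact e.symm)
    rw [Finset.card_pair ht.1.ne] at h2
    exact h2
  have three : ∀ x y z, 0 ≤ x → x < y → y < z → z < 1 → g x = g y → g x = g z → False := by
    intro x y z hx hxy hyz hz e1 e2
    have h2 := card_le_mult f hper hdiff hd b (g x) {x, y, z} (by
      intro w hw; simp at hw
      rcases hw with rfl | rfl | rfl <;> constructor <;> linarith) (by
      intro w hw; simp at hw
      rcases hw with rfl | rfl | rfl
      · rfl
      · exact e1.symm
      · exact e2.symm)
    rw [Finset.card_eq_three.2 ⟨x, y, z, hxy.ne, (hxy.trans hyz).ne, hyz.ne, rfl⟩] at h2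
    have := (hst.2 (g x)).1
    omega
  have hinj : InjOn g S0 := by
    have aux : ∀ s ∈ S0, ∀ s' ∈ S0, s < s' → g s = g s' → False := by
      rintro s ⟨hs, _⟩ s' ⟨hs', t', ht', e'⟩ hlt e
      exact three s s' t' hs.1.le hlt ht'.1 ht'.2 e (e.trans e')
    intro s hs s' hs' e
    rcases lt_trichotomy s s' with h | h | h
    · exact (aux s hs s' hs' h e).elim
    · exact h
    · exact (aux s' hs' s hs h e.symm).elim
  have hfin : S0.Finite := Set.Finite.of_injOn hmaps hinj hst.1
  have hcard : S0.ncard ≤ (crossingSetF f).ncard :=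
    Set.ncard_le_ncard_of_injOn g hmaps hinj hst.1
  set S := hfin.toFinset with hSdef
  have hScard : (S.card : ℤ) ≤ ((crossingSetF f).ncard : ℤ) := by
    rw [hSdef, ← Set.ncard_eq_toFinset_card S0 hfin]; exact_mod_cast hcard
  have hS : ∀ s, s ∈ S ↔ s ∈ Ioo (0:ℝ) 1 ∧ ∃ t ∈ Ioo s 1, g s = g t := by
    intro s; rw [hSdef, Set.Finite.mem_toFinset]; rfl
  have hun : ∀ s ∈ S, ∀ t ∈ Ioo s 1, ∀ t' ∈ Ioo s 1, g s = g t → g s = g t' → t = t' := by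
    intro s hs t ht t' ht' e e'
    have h0 := ((hS s).1 hs).1.1.le
    rcases lt_trichotomy t t' with h | h | h
    · exact (three s t t' h0 ht.1 h ht'.2 e e').elim
    · exact h
    · exact (three s t' t h0 ht'.1 h ht.2 e' e).elim
  -- the angle function of g
  have hωb : θ (1 + b) - θ (0 + b) = 2 * Real.pi * ω := by
    have hex : ∀ t, ∃ n : ℤ, θ (t + 1) = θ t + 2 * Real.pi * n := by
      intro t
      refine lift_diff (deriv f t) (hd t) _ _ ?_ (lθ t)
      have := lθ (t + 1)
      rwa [dper] at this
    choose n hn using hex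
    have hncont : Continuous n := by
      have : Continuous (fun t => (n t : ℝ)) := by
        have : (fun t => (n t : ℝ)) = fun t => (θ (t + 1) - θ t) / (2 * Real.pi) := by
          funext t
          rw [hn t]; field_simp; ring
        rw [this]; fun_prop
      exact Int.isClosedEmbedding_coe_real.isEmbedding.continuous_iff.2 this
    have hconst : n b = n 0 := PreconnectedSpace.constant inferInstance hncont
    have h0 := hn 0
    rw [zero_add] at h0
    have hb := hn b
    rw [add_comm 1 b, zero_add, hb, hconst]
    linarith
  rcases lt_trichotomy (deriv f b).re 0 with hneg | hz | hpos
  · right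
    have rd : ∀ t, deriv (fun t => -(starRingEnd ℂ) (g t)) t = -(starRingEnd ℂ) (deriv g t) := by
      intro t
      have h1 : HasDerivAt (fun t => (starRingEnd ℂ) (g t)) ((starRingEnd ℂ) (deriv g t)) t :=
        Complex.conjCLE.toContinuousLinearMap.hasFDerivAt.comp_hasDerivAt t (gdiff t).hasDerivAt
      exact h1.neg.deriv
    have eqv : ∀ z w : ℂ, -(starRingEnd ℂ) z = -(starRingEnd ℂ) w ↔ z = w := by
      intro z w
      rw [neg_inj]; exact (starRingEnd ℂ).injective.eq_iff
    have := core (fun t => -(starRingEnd ℂ) (g t)) (fun t => by beta_reduce; rw [gper])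
      ((Complex.conjCLE.toContinuousLinearMap.contDiff.comp gsm).neg)
      (fun t => by rw [rd, gd]; simpa using hd (t + b))
      (by rw [rd, gd]; simpa using hneg)
      (fun t => by simpa [hg] using hmin (t + b))
      (fun t ht => by rw [Ne, eqv]; exact gbase t ht) S
      (fun s => by simp only [eqv]; exact hS s)
      (by simp only [eqv]; exact hun)
      (fun t => Real.pi - θ (t + b)) (by fun_prop) (by
        intro t
        rw [rd, gd, norm_neg, Complex.norm_conj]
        conv_lhs => rw [lθ (t + b)]
        rw [map_mul, Complex.conj_ofReal, ← Complex.exp_conj]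
        simp only [map_mul, Complex.conj_ofReal, Complex.conj_I]
        push_cast
        rw [sub_mul, Complex.exp_sub, Complex.exp_pi_mul_I, mul_neg, Complex.exp_neg]
        ring) (-ω) (by push_cast; linarith)
    rw [sub_neg_eq_add] at this
    exact this.trans hScard
  · exact absurd (Complex.ext hz db) (hd b)
  · left
    have := core g gper gsm (fun t => by rw [gd]; exact hd _) (by rw [gd, zero_add]; exact hpos)
      (fun t => by rw [g0]; exact hmin _) gbase S hS hun (fun t => θ (t + b)) (by fun_prop)
      (fun t => by rw [gd]; exact lθ _) ω hωb
    exact this.trans hScard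

theorem lower_bound (c : PlanarCurve) (ω : ℤ) (hs : c.Stable) (hW : c.HasWhitney ω) :
    (|ω| - 1).natAbs ≤ c.crossings := by
  rcases lower c hs ω hW with h | h <;>
  · rw [abs_le] at h
    rcases abs_cases ω with h' | h' <;> omega


/-- Combinatorial description of the double points of a curve. -/
def DData (f : ℝ → ℂ) (n : ℕ) : Prop :=
  ∃ T : Finset ℂ, T.card = n ∧
    (∀ s ∈ Ico (0:ℝ) 1, ∀ t ∈ Ico (0:ℝ) 1, s ≠ t → f s = f t →
      f s ∈ T ∧ det2 (deriv f s) (deriv f t) ≠ 0) ∧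
    (∀ p ∈ T, ∃ s ∈ Ico (0:ℝ) 1, ∃ t ∈ Ico (0:ℝ) 1, s ≠ t ∧ f s = p ∧ f t = p) ∧
    (∀ s ∈ Ico (0:ℝ) 1, ∀ t ∈ Ico (0:ℝ) 1, ∀ u ∈ Ico (0:ℝ) 1, s ≠ t → f s = f t → f s = f u →
      u = s ∨ u = t)

theorem DData.conj {f : ℝ → ℂ} {n : ℕ} (h : DData f n) :
    DData (fun t => (starRingEnd ℂ) (f t)) n := by
  obtain ⟨T, hc, h1, h2, h3⟩ := h
  have inj : ∀ z w : ℂ, (starRingEnd ℂ) z = (starRingEnd ℂ) w ↔ z = w :=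
    fun z w => (starRingEnd ℂ).injective.eq_iff
  have dd : ∀ t, deriv (fun t => (starRingEnd ℂ) (f t)) t = (starRingEnd ℂ) (deriv f t) := by
    intro t
    exact deriv.star (f := f) 
  refine ⟨T.image (starRingEnd ℂ), ?_, ?_, ?_, ?_⟩
  · rw [Finset.card_image_of_injective _ (starRingEnd ℂ).injective, hc]
  · intro s hs t ht hst he
    rw [inj] at he
    obtain ⟨a, b⟩ := h1 s hs t ht hst he
    refine ⟨Finset.mem_image_of_mem _ a, ?_⟩
    rw [dd, dd]
    intro h0; apply b
    simp only [det2, Complex.conj_re, Complex.conj_im] at h0 ⊢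
    linarith
  · intro p hp
    obtain ⟨p', hp', rfl⟩ := Finset.mem_image.1 hp
    obtain ⟨s, hs, t, ht, hst, e1, e2⟩ := h2 p' hp'
    exact ⟨s, hs, t, ht, hst, by simp only [e1], by simp only [e2]⟩
  · intro s hs t ht u hu hst e1 e2
    rw [inj] at e1 e2
    exact h3 s hs t ht u hu hst e1 e2

theorem DData.stable {f : ℝ → ℂ} {n : ℕ} (h : DData f n) :
    StableF f ∧ (crossingSetF f).ncard = n := by
  obtain ⟨T, hc, h1, h2, h3⟩ := h
  have hle : ∀ p, multF f p ≤ 2 ∧ {t ∈ Ico (0:ℝ) 1 | f t = p}.Finite := by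
    intro p
    unfold multF
    by_cases hs : {t ∈ Ico (0:ℝ) 1 | f t = p}.Subsingleton
    · haveI := hs.finite.to_subtype
      have := Set.ncard_le_one_iff_subsingleton |>.2 hs
      exact ⟨by omega, hs.finite⟩
    · rw [Set.not_subsingleton_iff] at hs
      obtain ⟨s, hs, t, ht, hst⟩ := hs
      have hsub : {t ∈ Ico (0:ℝ) 1 | f t = p} ⊆ {s, t} := by
        intro u hu
        exact h3 s hs.1 t ht.1 u hu.1 hst (hs.2.trans ht.2.symm) (hs.2.trans hu.2.symm)
      have hf : ({s, t} : Set ℝ).Finite := Set.toFinite _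
      refine ⟨(Set.ncard_le_ncard hsub hf).trans (Set.ncard_pair hst).le, hf.subset hsub⟩
  have hset : crossingSetF f = (T : Set ℂ) := by
    ext p
    simp only [crossingSetF, mem_ofPred_eq, Finset.mem_coe]
    constructor
    · intro hp
      obtain ⟨s, hs, t, ht, hst⟩ := (Set.one_lt_ncard_iff (hle p).2).1 hp |>.imp fun a h =>
        (⟨h.choose_spec.1, h.choose, h.choose_spec.2.1, h.choose_spec.2.2⟩ :
          a ∈ {t ∈ Ico (0:ℝ) 1 | f t = p} ∧ ∃ b, b ∈ {t ∈ Ico (0:ℝ) 1 | f t = p} ∧ a ≠ b)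
      have := (h1 s hs.1 t ht.1 hst (hs.2.trans ht.2.symm)).1
      rwa [hs.2] at this
    · intro hp
      obtain ⟨s, hs, t, ht, hst, e1, e2⟩ := h2 p hp
      exact (Set.one_lt_ncard_iff (hle p).2).2 ⟨s, t, ⟨hs, e1⟩, ⟨ht, e2⟩, hst⟩
  refine ⟨⟨?_, fun p => ⟨(hle p).1, fun _ => ?_⟩⟩, ?_⟩
  · rw [hset]; exact T.finite_toSet
  · intro s hs t ht hst e1 e2
    exact (h1 s hs t ht hst (e1.trans e2.symm)).2
  · rw [hset, Set.ncard_coe_finset, hc]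

theorem hneg (m : ℕ) (hm : 2 ≤ m) (d : ℝ) (h0 : 0 < d) (h1 : d < Real.pi / m) :
    m * Real.cos (m * d) * Real.sin d - Real.sin (m * d) * Real.cos d < 0 := by
  have hm' : (2:ℝ) ≤ m := by exact_mod_cast hm
  have hpi := Real.pi_pos
  have hd : ∀ x, HasDerivAt (fun d : ℝ => m * Real.cos (m * d) * Real.sin d - Real.sin (m * d) * Real.cos d)
      ((1 - (m:ℝ)^2) * (Real.sin (m * x) * Real.sin x)) x := by
    intro x
    have hl : HasDerivAt (fun d : ℝ => (m:ℝ) * d) m x := by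
      simpa using (hasDerivAt_id x).const_mul (m:ℝ)
    refine (((hl.cos.const_mul (m:ℝ)).mul (Real.hasDerivAt_sin x)).sub
      (hl.sin.mul (Real.hasDerivAt_cos x))).congr_deriv ?_
    ring
  have hanti : StrictAntiOn (fun d : ℝ => m * Real.cos (m * d) * Real.sin d - Real.sin (m * d) * Real.cos d)
      (Icc 0 (Real.pi / m)) := by
    apply strictAntiOn_of_deriv_neg (convex_Icc _ _)
    · fun_prop
    · intro x hx
      rw [interior_Icc] at hx
      rw [(hd x).deriv]
      have a1 : 0 < Real.sin (m * x) := by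
        apply Real.sin_pos_of_pos_of_lt_pi
        · have := hx.1; positivity
        · have := hx.2; rw [lt_div_iff₀ (by linarith)] at this; linarith
      have a2 : 0 < Real.sin x := by
        apply Real.sin_pos_of_pos_of_lt_pi hx.1
        refine hx.2.trans_le (div_le_self hpi.le (by linarith))
      exact mul_neg_of_neg_of_pos (by nlinarith) (mul_pos a1 a2)
  have := hanti ⟨le_refl _, by positivity⟩ ⟨h0.le, h1.le⟩ h0
  simpa using this

theorem ratio_anti (m : ℕ) (hm : 2 ≤ m) :
    StrictAntiOn (fun d : ℝ => Real.sin (m * d) / Real.sin d) (Ioo 0 (Real.pi / m)) := by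
  have hm' : (2:ℝ) ≤ m := by exact_mod_cast hm
  have hpi := Real.pi_pos
  have a2 : ∀ x ∈ Ioo 0 (Real.pi / m), 0 < Real.sin x := by
    intro x hx
    apply Real.sin_pos_of_pos_of_lt_pi hx.1
    refine hx.2.trans_le (div_le_self hpi.le (by linarith))
  have hd : ∀ x ∈ Ioo 0 (Real.pi / m), HasDerivAt (fun d : ℝ => Real.sin (m * d) / Real.sin d)
      ((m * Real.cos (m * x) * Real.sin x - Real.sin (m * x) * Real.cos x) / Real.sin x ^ 2) x := by
    intro x hx
    have hl : HasDerivAt (fun d : ℝ => (m:ℝ) * d) m x := by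
      simpa using (hasDerivAt_id x).const_mul (m:ℝ)
    refine (hl.sin.div (Real.hasDerivAt_sin x) (a2 x hx).ne').congr_deriv ?_
    ring
  apply strictAntiOn_of_deriv_neg (convex_Ioo _ _)
  · intro x hx
    exact (hd x hx).continuousAt.continuousWithinAt
  · intro x hx
    rw [interior_Ioo] at hx
    rw [(hd x hx).deriv]
    exact div_neg_of_neg_of_pos (hneg m hm x hx.1 hx.2) (pow_pos (a2 x hx) 2)

theorem exists_d0 (m : ℕ) (hm : 2 ≤ m) : ∃ d₀ : ℝ, 0 < d₀ ∧ d₀ < Real.pi / m ∧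
    0 < Real.sin d₀ ∧
    Real.sin (m * d₀) = (2 * (m:ℝ) / 3) * Real.sin d₀ ∧
    ∀ d, 0 < d → d ≤ Real.pi / 2 → |Real.sin (m * d)| = (2 * (m:ℝ) / 3) * Real.sin d → d = d₀ := by
  have hm' : (2:ℝ) ≤ m := by exact_mod_cast hm
  have hpi := Real.pi_pos
  have hpi3 := Real.pi_gt_three
  have a2 : ∀ x ∈ Ioo 0 (Real.pi / m), 0 < Real.sin x := by
    intro x hx
    apply Real.sin_pos_of_pos_of_lt_pi hx.1
    refine hx.2.trans_le (div_le_self hpi.le (by linarith))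
  have hpm : 0 < Real.sin (Real.pi / m) := by
    apply Real.sin_pos_of_pos_of_lt_pi (by positivity)
    exact div_lt_self hpi (by linarith)
  have hiv := intermediate_value_Ioo' (a := 1 / (m:ℝ)) (b := Real.pi / m)
    (f := fun d : ℝ => Real.sin (m * d) - (2 * (m:ℝ) / 3) * Real.sin d)
    (by gcongr; linarith) (by fun_prop)
  have h0 : (0:ℝ) ∈ Ioo (Real.sin (m * (Real.pi / m)) - (2 * (m:ℝ) / 3) * Real.sin (Real.pi / m))
      (Real.sin (m * (1 / m)) - (2 * (m:ℝ) / 3) * Real.sin (1 / m)) := by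
    rw [mul_div_cancel₀ _ (by positivity), mul_div_cancel₀ _ (by positivity), Real.sin_pi]
    constructor
    · have : 0 < (2 * (m:ℝ) / 3) * Real.sin (Real.pi / m) := by positivity
      linarith
    · have h1 := Real.sin_gt_sub_cube (x := 1) one_pos
      have h2 := Real.sin_le (x := 1 / (m:ℝ)) (by positivity)
      have h3 : (2 * (m:ℝ) / 3) * Real.sin (1 / m) ≤ (2 * (m:ℝ) / 3) * (1 / m) := by gcongr
      have h4 : (2 * (m:ℝ) / 3) * (1 / m) = 2 / 3 := by field_simp
      norm_num at h1
      linarith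
  obtain ⟨d₀, hd, he⟩ := hiv h0
  have hd0 : 0 < d₀ := lt_trans (by positivity) hd.1
  have hs0 := a2 d₀ ⟨hd0, hd.2⟩
  have he' : Real.sin (m * d₀) = (2 * (m:ℝ) / 3) * Real.sin d₀ := by
    have : Real.sin (m * d₀) - (2 * (m:ℝ) / 3) * Real.sin d₀ = 0 := he
    linarith
  refine ⟨d₀, hd0, hd.2, hs0, he', ?_⟩
  intro d h1 h2 h3
  have hlt : d < Real.pi / m := by
    by_contra hge
    push Not at hge
    have h4 := Real.mul_le_sin h1.le h2
    have h5 := Real.abs_sin_le_one (m * d)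
    rw [h3] at h5
    have h6 : (2 * (m:ℝ) / 3) * (2 / Real.pi * (Real.pi / m)) ≤ (2 * (m:ℝ) / 3) * Real.sin d := by
      gcongr
      refine le_trans ?_ h4
      gcongr
    have h7 : (2 * (m:ℝ) / 3) * (2 / Real.pi * (Real.pi / m)) = 4 / 3 := by field_simp; norm_num
    linarith
  have hp : 0 < Real.sin (m * d) := by
    apply Real.sin_pos_of_pos_of_lt_pi (by positivity)
    rw [lt_div_iff₀ (by linarith)] at hlt; linarith
  rw [abs_of_pos hp] at h3
  have hsd := a2 d ⟨h1, hlt⟩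
  refine (ratio_anti m hm).injOn ⟨h1, hlt⟩ ⟨hd0, hd.2⟩ ?_
  rw [h3, he', mul_div_cancel_right₀ _ hsd.ne', mul_div_cancel_right₀ _ hs0.ne']


theorem pair_form (z w : ℂ) (hz : ‖z‖ = 1) (hw : ‖w‖ = 1) (h : z ≠ w) :
    ∃ q : ℂ, ∃ d : ℝ, ‖q‖ = 1 ∧ 0 < d ∧ d ≤ Real.pi / 2 ∧
      ((z = q * Complex.exp (d * Complex.I) ∧ w = q * Complex.exp (-(d * Complex.I))) ∨
       (w = q * Complex.exp (d * Complex.I) ∧ z = q * Complex.exp (-(d * Complex.I)))) := by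
  have hz0 : z ≠ 0 := by intro h0; simp [h0] at hz
  have hn : ‖w / z‖ = 1 := by rw [norm_div, hz, hw, div_one]
  have hwz : w = z * Complex.exp (Complex.arg (w / z) * Complex.I) := by
    have := Complex.norm_mul_exp_arg_mul_I (w / z)
    rw [hn, Complex.ofReal_one, one_mul] at this
    rw [this]; field_simp
  set α := Complex.arg (w / z) with hα
  have h1 := Complex.neg_pi_lt_arg (w / z)
  have h2 := Complex.arg_le_pi (w / z)
  rw [← hα] at h1 h2
  have hα0 : α ≠ 0 := by
    intro h0; rw [h0] at hwz; simp at hwz; exact h hwz.symm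
  have key : ∀ β : ℝ, z * Complex.exp ((β:ℝ) * Complex.I) * Complex.exp (-((β:ℝ) * Complex.I)) = z := by
    intro β; rw [mul_assoc, ← Complex.exp_add]; simp
  refine ⟨z * Complex.exp (((α / 2 : ℝ) : ℂ) * Complex.I), |α / 2|, ?_, ?_, ?_, ?_⟩
  · rw [norm_mul, hz, Complex.norm_exp_ofReal_mul_I, one_mul]
  · positivity
  · rw [abs_le]; constructor <;> linarith
  · have e2 : z * Complex.exp (((α / 2 : ℝ) : ℂ) * Complex.I) * Complex.exp (((α / 2 : ℝ) : ℂ) * Complex.I) = w := by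
      rw [mul_assoc, ← Complex.exp_add]
      conv_rhs => rw [hwz]
      congr 2; push_cast; ring
    rcases lt_or_gt_of_ne hα0 with hl | hg
    · left
      rw [abs_of_neg (by linarith)]
      constructor
      · rw [Complex.ofReal_neg, neg_mul]; exact (key _).symm
      · rw [Complex.ofReal_neg, neg_mul, neg_neg]; exact e2.symm
    · right
      rw [abs_of_pos (by linarith)]
      exact ⟨e2.symm, (key _).symm⟩

/-- The unit circle parametrization. -/
def ee (t : ℝ) : ℂ := Complex.exp (((2 * Real.pi * t : ℝ) : ℂ) * Complex.I)

theorem ee_norm (t : ℝ) : ‖ee t‖ = 1 := Complex.norm_exp_ofReal_mul_I _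

theorem ee_inj (s t : ℝ) (hs : s ∈ Ico (0:ℝ) 1) (ht : t ∈ Ico (0:ℝ) 1) (h : ee s = ee t) : s = t := by
  obtain ⟨n, hn⟩ := Complex.exp_eq_exp_iff_exists_int.1 h
  have h1 : (2 * Real.pi * s : ℝ) = 2 * Real.pi * t + n * (2 * Real.pi) := by
    have := congrArg Complex.im hn
    simpa using this
  have h2 : s = t + n := by
    have := Real.pi_pos
    have h3 : (2 * Real.pi) * s = (2 * Real.pi) * (t + n) := by linarith
    exact mul_left_cancel₀ (by positivity) h3
  have h3 : |(n:ℝ)| < 1 := by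
    rw [abs_lt]; constructor <;> linarith [hs.1, hs.2, ht.1, ht.2]
  have h4 : n = 0 := by
    rw [← Int.abs_lt_one_iff]; exact_mod_cast h3
  rw [h2, h4]; simp

theorem ee_surj (z : ℂ) (hz : ‖z‖ = 1) : ∃ t ∈ Ico (0:ℝ) 1, ee t = z := by
  refine ⟨Int.fract (Complex.arg z / (2 * Real.pi)), ⟨Int.fract_nonneg _, Int.fract_lt_one _⟩, ?_⟩
  have := Complex.norm_mul_exp_arg_mul_I z
  rw [hz, Complex.ofReal_one, one_mul] at this
  conv_rhs => rw [← this]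
  rw [ee, Complex.exp_eq_exp_iff_exists_int]
  refine ⟨-⌊Complex.arg z / (2 * Real.pi)⌋, ?_⟩
  rw [Int.fract]
  have : (Real.pi : ℂ) ≠ 0 := by exact_mod_cast Real.pi_ne_zero
  push_cast
  field_simp
  ring

theorem dfp_eq (m : ℕ) (t : ℝ) :
    deltaFunPos m t = ee t ^ m + ((2 * (m : ℝ) / 3 : ℝ) : ℂ) * ee t := by
  rw [deltaFunPos, ee, ← Complex.exp_nat_mul]
  congr 2; push_cast; ring

theorem ee_deriv (t : ℝ) : HasDerivAt ee (2 * Real.pi * Complex.I * ee t) t := by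
  have h1 : HasDerivAt (fun t : ℝ => ((2 * Real.pi * t : ℝ) : ℂ) * Complex.I) (2 * Real.pi * Complex.I) t := by
    have : HasDerivAt (fun t : ℝ => (2 * Real.pi * t : ℝ)) (2 * Real.pi) t := by
      simpa using (hasDerivAt_id t).const_mul (2 * Real.pi)
    have := (this.ofReal_comp).mul_const Complex.I
    simpa using this
  refine h1.cexp.congr_deriv ?_
  rw [ee]; ring

theorem dfp_deriv (m : ℕ) (hm : 1 ≤ m) (t : ℝ) :
    deriv (deltaFunPos m) t = (2 * Real.pi * m * Complex.I) * (ee t ^ m + (2 / 3) * ee t) := by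
  have h : deltaFunPos m = fun t => ee t ^ m + ((2 * (m : ℝ) / 3 : ℝ) : ℂ) * ee t :=
    funext (dfp_eq m)
  rw [h]
  have := ((ee_deriv t).pow m).add ((ee_deriv t).const_mul ((2 * (m : ℝ) / 3 : ℝ) : ℂ))
  refine (this.congr_deriv ?_).deriv
  obtain ⟨k, rfl⟩ : ∃ k, m = k + 1 := ⟨m - 1, by omega⟩
  push_cast
  ring

theorem ddata_one : DData (deltaFunPos 1) 0 := by
  have key : ∀ s ∈ Ico (0:ℝ) 1, ∀ t ∈ Ico (0:ℝ) 1, s ≠ t → deltaFunPos 1 s ≠ deltaFunPos 1 t := by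
    intro s hs t ht hst he
    rw [dfp_eq, dfp_eq] at he
    apply hst
    apply ee_inj s t hs ht
    push_cast at he
    linear_combination (3 / 5) * he
  refine ⟨∅, rfl, ?_, ?_, ?_⟩
  · intro s hs t ht hst he; exact absurd he (key s hs t ht hst)
  · simp
  · intro s hs t ht u hu hst he; exact absurd he (key s hs t ht hst)


theorem exp_form (d : ℝ) (m : ℕ) :
    Complex.exp (d * Complex.I) ^ m = (Real.cos (m * d) : ℂ) + (Real.sin (m * d) : ℂ) * Complex.I ∧
    Complex.exp (-(d * Complex.I)) ^ m = (Real.cos (m * d) : ℂ) - (Real.sin (m * d) : ℂ) * Complex.I := by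
  constructor
  · rw [← Complex.exp_nat_mul, Complex.ofReal_cos, Complex.ofReal_sin, ← Complex.exp_mul_I]
    congr 1; push_cast; ring
  · rw [← Complex.exp_nat_mul, Complex.ofReal_cos, Complex.ofReal_sin]
    have : (m:ℂ) * -(d * Complex.I) = ((-(m * d) : ℝ) : ℂ) * Complex.I := by push_cast; ring
    rw [this, Complex.exp_mul_I, ← Complex.ofReal_cos, ← Complex.ofReal_sin, Real.cos_neg, Real.sin_neg]
    push_cast; ring

theorem exp_form1 (d : ℝ) :
    Complex.exp (d * Complex.I) = (Real.cos d : ℂ) + (Real.sin d : ℂ) * Complex.I ∧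
    Complex.exp (-(d * Complex.I)) = (Real.cos d : ℂ) - (Real.sin d : ℂ) * Complex.I := by
  simpa using exp_form d 1

theorem pair_eqn (k : ℕ) (a d : ℝ) (q : ℂ) (hq : q ≠ 0)
    (h : (q * Complex.exp (d * Complex.I)) ^ (k + 1) + a * (q * Complex.exp (d * Complex.I)) =
      (q * Complex.exp (-(d * Complex.I))) ^ (k + 1) + a * (q * Complex.exp (-(d * Complex.I)))) :
    q ^ k * (Real.sin ((k + 1 : ℕ) * d) : ℂ) = -((a * Real.sin d : ℝ) : ℂ) := by
  rw [mul_pow, mul_pow, (exp_form d (k + 1)).1, (exp_form d (k + 1)).2, (exp_form1 d).1,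
    (exp_form1 d).2] at h
  have h2 : (2 * q * Complex.I) *
      (q ^ k * (Real.sin ((k + 1 : ℕ) * d) : ℂ) + a * Real.sin d) = 0 := by
    rw [pow_succ] at h
    linear_combination h
  have h3 := (mul_eq_zero.1 h2).resolve_left (by simp [hq])
  rw [Complex.ofReal_mul]
  linear_combination h3

theorem ddata_big (k : ℕ) (hk : 1 ≤ k) : DData (deltaFunPos (k + 1)) k := by
  obtain ⟨d₀, hd0, hdm, hs0, hsm, huniq⟩ := exists_d0 (k + 1) (by omega)
  have hh := hneg (k + 1) (by omega) d₀ hd0 hdm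
  set a : ℝ := 2 * ((k + 1 : ℕ) : ℝ) / 3 with ha
  have hk' : (1:ℝ) ≤ k := by exact_mod_cast hk
  have ha1 : 4 / 3 ≤ a := by rw [ha]; push_cast; linarith
  set κ := Complex.exp (d₀ * Complex.I) with hκ
  set κ' := Complex.exp (-(d₀ * Complex.I)) with hκ'
  have nκ : ‖κ‖ = 1 := Complex.norm_exp_ofReal_mul_I _
  have nκ' : ‖κ'‖ = 1 := by
    have := Complex.norm_exp_ofReal_mul_I (-d₀)
    rwa [Complex.ofReal_neg, neg_mul] at this
  obtain ⟨f1, f2⟩ := exp_form d₀ (k + 1)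
  obtain ⟨g1, g2⟩ := exp_form1 d₀
  rw [← hκ] at f1 g1
  rw [← hκ'] at f2 g2
  have hne : κ ≠ κ' := by
    rw [g1, g2]; intro h
    have := congrArg Complex.im h
    simp [-Complex.ofReal_sin, -Complex.ofReal_cos] at this
    have h' : Real.sin d₀ = 0 := by linarith
    exact hs0.ne' h'
  set S := Real.sin d₀ with hS
  set C := Real.cos d₀ with hC
  set Sm := Real.sin ((k + 1 : ℕ) * d₀) with hSm
  set Cm := Real.cos ((k + 1 : ℕ) * d₀) with hCm
  have sc : S ^ 2 + C ^ 2 = 1 := Real.sin_sq_add_cos_sq _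
  have scm : Sm ^ 2 + Cm ^ 2 = 1 := Real.sin_sq_add_cos_sq _
  set R : ℝ := a * C - Cm with hR
  have hR0 : R ≠ 0 := by
    intro h0
    have : Cm = a * C := by linarith
    rw [this, hsm] at scm
    have : a ^ 2 * (S ^ 2 + C ^ 2) = 1 := by linarith
    rw [sc] at this; nlinarith
  have qnorm : ∀ q : ℂ, q ^ k = -1 → ‖q‖ = 1 := by
    intro q hq
    have := congrArg norm hq
    rw [norm_pow, norm_neg, norm_one] at this
    exact (pow_eq_one_iff_of_nonneg (norm_nonneg _) (by omega)).1 this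
  -- the structure of pairs
  have pairs : ∀ z w : ℂ, ‖z‖ = 1 → ‖w‖ = 1 → z ≠ w → z ^ (k + 1) + a * z = w ^ (k + 1) + a * w →
      ∃ q : ℂ, q ^ k = -1 ∧ ((z = q * κ ∧ w = q * κ') ∨ (w = q * κ ∧ z = q * κ')) := by
    intro z w hz hw hzw he
    obtain ⟨q, d, hq, h1, h2, h3⟩ := pair_form z w hz hw hzw
    have hq0 : q ≠ 0 := by intro h0; simp [h0] at hq
    have hsd : 0 < Real.sin d := Real.sin_pos_of_pos_of_lt_pi h1 (by linarith [Real.pi_pos])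
    have eqn : q ^ k * (Real.sin ((k + 1 : ℕ) * d) : ℂ) = -((a * Real.sin d : ℝ) : ℂ) := by
      apply pair_eqn k a d q hq0
      rcases h3 with ⟨e1, e2⟩ | ⟨e1, e2⟩
      · rw [← e1, ← e2]; exact he
      · rw [← e1, ← e2]; exact he.symm
    have hd : d = d₀ := by
      apply huniq d h1 h2
      have := congrArg norm eqn
      rw [norm_mul, norm_pow, hq, one_pow, one_mul, norm_neg, Complex.norm_real, Complex.norm_real,
        Real.norm_eq_abs, Real.norm_eq_abs] at this
      rw [this, abs_of_pos (by positivity)]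
    subst hd
    refine ⟨q, ?_, h3⟩
    rw [← hSm, hsm] at eqn
    have hz : ((a * S : ℝ) : ℂ) ≠ 0 := by
      have : a * S ≠ 0 := by positivity
      exact_mod_cast this
    apply mul_right_cancel₀ hz
    rw [eqn, hS]; ring
  -- the values
  have val : ∀ q : ℂ, q ^ k = -1 → (q * κ) ^ (k + 1) + a * (q * κ) = R * q ∧
      (q * κ') ^ (k + 1) + a * (q * κ') = R * q := by
    intro q hq
    constructor
    · rw [mul_pow, pow_succ q, hq, f1, g1, hR, hsm]; push_cast; ring
    · rw [mul_pow, pow_succ q, hq, f2, g2, hR, hsm]; push_cast; ring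
  have inj : ∀ q q' : ℂ, (R:ℂ) * q = R * q' → q = q' := fun q q' h =>
    mul_left_cancel₀ (by exact_mod_cast hR0) h
  have dfe : ∀ t, deltaFunPos (k + 1) t = ee t ^ (k + 1) + a * ee t := fun t => dfp_eq (k + 1) t
  have dfd : ∀ t, deriv (deltaFunPos (k + 1)) t =
      (2 * Real.pi * (k + 1 : ℕ) * Complex.I) * (ee t ^ (k + 1) + (2 / 3) * ee t) :=
    fun t => dfp_deriv (k + 1) (by omega) t
  have ncoll : ∀ s ∈ Ico (0:ℝ) 1, ∀ t ∈ Ico (0:ℝ) 1, s ≠ t → ee s ≠ ee t :=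
    fun s hs t ht hst h => hst (ee_inj s t hs ht h)
  -- transversality
  have hW1 : (2 / 3 : ℝ) * S - Sm ≠ 0 := by
    rw [hsm]
    have : (2 / 3 - a) * S < 0 := mul_neg_of_neg_of_pos (by linarith) hs0
    intro h0; linarith
  have hW2 : (2 / 3 : ℝ) * C - Cm ≠ 0 := by
    intro h0
    have hC' : Cm = 2 / 3 * C := by linarith
    rw [hsm, hC', ha] at hh
    have : ((k + 1 : ℕ) : ℝ) * (2 / 3 * C) * S - 2 * ((k + 1 : ℕ) : ℝ) / 3 * S * C = 0 := by ring
    linarith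
  have tr : ∀ q : ℂ, q ^ k = -1 →
      det2 ((2 * Real.pi * (k + 1 : ℕ) * Complex.I) * ((q * κ) ^ (k + 1) + (2 / 3) * (q * κ)))
        ((2 * Real.pi * (k + 1 : ℕ) * Complex.I) * ((q * κ') ^ (k + 1) + (2 / 3) * (q * κ'))) ≠ 0 := by
    intro q hq
    set A : ℂ := 2 * Real.pi * (k + 1 : ℕ) * Complex.I * q with hA
    have hA0 : A ≠ 0 := by
      have hq0 : q ≠ 0 := by
        intro h0; have := qnorm q hq; simp [h0] at this
      have hp : (Real.pi : ℂ) ≠ 0 := by exact_mod_cast Real.pi_ne_zero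
      have hkk : ((k + 1 : ℕ) : ℂ) ≠ 0 := by exact_mod_cast Nat.succ_ne_zero k
      rw [hA]
      exact mul_ne_zero (mul_ne_zero (mul_ne_zero (mul_ne_zero two_ne_zero hp) hkk) Complex.I_ne_zero) hq0
    have e1 : (2 * Real.pi * (k + 1 : ℕ) * Complex.I) * ((q * κ) ^ (k + 1) + (2 / 3) * (q * κ)) =
        A * ⟨2 / 3 * C - Cm, 2 / 3 * S - Sm⟩ := by
      rw [Complex.mk_eq_add_mul_I, mul_pow, pow_succ q, hq, f1, g1, hA]; push_cast; ring
    have e2 : (2 * Real.pi * (k + 1 : ℕ) * Complex.I) * ((q * κ') ^ (k + 1) + (2 / 3) * (q * κ')) =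
        A * ⟨2 / 3 * C - Cm, -(2 / 3 * S - Sm)⟩ := by
      rw [Complex.mk_eq_add_mul_I, mul_pow, pow_succ q, hq, f2, g2, hA]; push_cast; ring
    rw [e1, e2]
    have hN : Complex.normSq A ≠ 0 := by simpa using hA0
    have : det2 (A * ⟨2 / 3 * C - Cm, 2 / 3 * S - Sm⟩) (A * ⟨2 / 3 * C - Cm, -(2 / 3 * S - Sm)⟩) =
        -2 * Complex.normSq A * (2 / 3 * C - Cm) * (2 / 3 * S - Sm) := by
      simp only [det2, Complex.mul_re, Complex.mul_im, Complex.normSq_apply]; ring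
    rw [this]
    exact mul_ne_zero (mul_ne_zero (mul_ne_zero (by norm_num) hN) hW2) hW1
  have detswap : ∀ u v : ℂ, det2 u v ≠ 0 → det2 v u ≠ 0 := by
    intro u v h h'; apply h; simp only [det2] at h' ⊢; linarith
  have memroots : ∀ q : ℂ, q ∈ (Polynomial.nthRoots k (-1 : ℂ)).toFinset ↔ q ^ k = -1 := by
    intro q; rw [Multiset.mem_toFinset, Polynomial.mem_nthRoots (by omega)]
  refine ⟨(Polynomial.nthRoots k (-1 : ℂ)).toFinset.image (fun q => (R:ℂ) * q), ?_, ?_, ?_, ?_⟩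
  · rw [Finset.card_image_of_injective _ (fun q q' h => inj q q' h)]
    have hp := Complex.isPrimitiveRoot_exp k (by omega)
    rw [Multiset.toFinset_card_of_nodup (hp.nthRoots_nodup (by norm_num)), hp.card_nthRoots, if_pos]
    exact IsAlgClosed.exists_pow_nat_eq _ (by omega)
  · intro s hs t ht hst he
    rw [dfe, dfe] at he
    obtain ⟨q, hq, h⟩ := pairs _ _ (ee_norm s) (ee_norm t) (ncoll s hs t ht hst) he
    rw [dfd, dfd, dfe]
    rcases h with ⟨h1, h2⟩ | ⟨h1, h2⟩
    · rw [h1, h2, (val q hq).1]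
      exact ⟨Finset.mem_image_of_mem _ ((memroots q).2 hq), tr q hq⟩
    · rw [h1, h2, (val q hq).2]
      exact ⟨Finset.mem_image_of_mem _ ((memroots q).2 hq), detswap _ _ (tr q hq)⟩
  · intro p hp
    obtain ⟨q, hq, rfl⟩ := Finset.mem_image.1 hp
    rw [memroots] at hq
    obtain ⟨s, hs, es⟩ := ee_surj (q * κ) (by rw [norm_mul, qnorm q hq, nκ, one_mul])
    obtain ⟨t, ht, et⟩ := ee_surj (q * κ') (by rw [norm_mul, qnorm q hq, nκ', one_mul])
    refine ⟨s, hs, t, ht, ?_, by rw [dfe, es, (val q hq).1], by rw [dfe, et, (val q hq).2]⟩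
    intro h; rw [h, et] at es
    have hq0 : q ≠ 0 := by
      intro h0; have := qnorm q hq; simp [h0] at this
    exact hne (mul_left_cancel₀ hq0 es.symm)
  · intro s hs t ht u hu hst he he'
    by_contra hcon
    push Not at hcon
    obtain ⟨hus, hut⟩ := hcon
    rw [dfe, dfe] at he he'
    obtain ⟨q, hq, h⟩ := pairs _ _ (ee_norm s) (ee_norm t) (ncoll s hs t ht hst) he
    obtain ⟨r, hr, h'⟩ := pairs _ _ (ee_norm s) (ee_norm u) (ncoll s hs u hu (Ne.symm hus)) he'
    have vs : ee s ^ (k + 1) + a * ee s = R * q := by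
      rcases h with ⟨h1, h2⟩ | ⟨h1, h2⟩
      · rw [h1, (val q hq).1]
      · rw [h2, (val q hq).2]
    have vs' : ee s ^ (k + 1) + a * ee s = R * r := by
      rcases h' with ⟨h1, h2⟩ | ⟨h1, h2⟩
      · rw [h1, (val r hr).1]
      · rw [h2, (val r hr).2]
    have hqr : q = r := inj _ _ (vs.symm.trans vs')
    subst hqr
    have n1 := ncoll u hu s hs hus
    have n2 := ncoll u hu t ht hut
    rcases h with ⟨h1, h2⟩ | ⟨h1, h2⟩ <;> rcases h' with ⟨h3, h4⟩ | ⟨h3, h4⟩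
    · exact n2 (h4.trans h2.symm)
    · exact n1 (h3.trans h1.symm)
    · exact n1 (h4.trans h2.symm)
    · exact n2 (h3.trans h1.symm)


/-- The figure eight. -/
def eight (t : ℝ) : ℂ :=
  ((Real.sin (2 * Real.pi * t) : ℝ) : ℂ) + ((Real.sin (4 * Real.pi * t) : ℝ) : ℂ) * Complex.I

theorem eight_deriv (t : ℝ) : deriv eight t =
    ⟨2 * Real.pi * Real.cos (2 * Real.pi * t), 4 * Real.pi * Real.cos (4 * Real.pi * t)⟩ := by
  have hl : ∀ c : ℝ, HasDerivAt (fun t : ℝ => c * t) c t := by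
    intro c; simpa using (hasDerivAt_id t).const_mul c
  have := ((hl (2 * Real.pi)).sin.ofReal_comp).add
    (((hl (4 * Real.pi)).sin.ofReal_comp).mul_const Complex.I)
  refine (this.congr_deriv ?_).deriv
  rw [Complex.mk_eq_add_mul_I]; push_cast; ring

theorem sin_zero_ico (s : ℝ) (hs : s ∈ Ico (0:ℝ) 1) (h : Real.sin (2 * Real.pi * s) = 0) :
    s = 0 ∨ s = 1 / 2 := by
  obtain ⟨n, hn⟩ := Real.sin_eq_zero_iff.1 h
  have h1 : (n:ℝ) = 2 * s := by
    apply mul_right_cancel₀ Real.pi_ne_zero; linarith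
  have h2 : (n:ℝ) < 2 := by linarith [hs.2]
  have h3 : (0:ℝ) ≤ n := by linarith [hs.1]
  have h2' : n < 2 := by exact_mod_cast h2
  have h3' : 0 ≤ n := by exact_mod_cast h3
  have : n = 0 ∨ n = 1 := by omega
  rcases this with rfl | rfl
  · left; push_cast at h1; linarith
  · right; push_cast at h1; linarith

theorem eight_zero : eight 0 = 0 := by simp [eight]

theorem eight_half : eight (1 / 2) = 0 := by
  rw [eight, show 2 * Real.pi * (1 / 2) = Real.pi by ring,
    show 4 * Real.pi * (1 / 2) = 2 * Real.pi by ring]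
  simp

theorem ddata_zero : DData eight 1 := by
  have key : ∀ s ∈ Ico (0:ℝ) 1, ∀ t ∈ Ico (0:ℝ) 1, s ≠ t → eight s = eight t →
      (s = 0 ∨ s = 1 / 2) ∧ (t = 0 ∨ t = 1 / 2) := by
    intro s hs t ht hst he
    have e1 : Real.sin (2 * Real.pi * s) = Real.sin (2 * Real.pi * t) := by
      have := congrArg Complex.re he
      simpa [eight, -Complex.ofReal_sin] using this
    have e2 : Real.sin (4 * Real.pi * s) = Real.sin (4 * Real.pi * t) := by
      have := congrArg Complex.im he
      simpa [eight, -Complex.ofReal_sin] using this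
    rw [show 4 * Real.pi * s = 2 * (2 * Real.pi * s) by ring,
      show 4 * Real.pi * t = 2 * (2 * Real.pi * t) by ring, Real.sin_two_mul, Real.sin_two_mul, ← e1] at e2
    by_cases h0 : Real.sin (2 * Real.pi * s) = 0
    · exact ⟨sin_zero_ico s hs h0, sin_zero_ico t ht (e1 ▸ h0)⟩
    · exfalso
      have e3 : Real.cos (2 * Real.pi * s) = Real.cos (2 * Real.pi * t) :=
        mul_left_cancel₀ (mul_ne_zero two_ne_zero h0) e2
      apply hst
      apply ee_inj s t hs ht
      rw [ee, ee, (exp_form1 _).1, (exp_form1 _).1, e1, e3]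
  have hd0 : deriv eight 0 = ⟨2 * Real.pi, 4 * Real.pi⟩ := by
    rw [eight_deriv]; simp
  have hd1 : deriv eight (1 / 2) = ⟨-(2 * Real.pi), 4 * Real.pi⟩ := by
    rw [eight_deriv, show 2 * Real.pi * (1 / 2) = Real.pi by ring,
      show 4 * Real.pi * (1 / 2) = 2 * Real.pi by ring]
    simp
  have hpi := Real.pi_pos
  have m0 : (0:ℝ) ∈ Ico (0:ℝ) 1 := by constructor <;> norm_num
  have m1 : (1 / 2:ℝ) ∈ Ico (0:ℝ) 1 := by constructor <;> norm_num
  refine ⟨{0}, rfl, ?_, ?_, ?_⟩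
  · intro s hs t ht hst he
    obtain ⟨h1 | h1, h2 | h2⟩ := key s hs t ht hst he
    · exact absurd (h1.trans h2.symm) hst
    · rw [h1, h2, eight_zero, hd0, hd1]
      refine ⟨by simp, ?_⟩
      simp only [det2]
      have : 0 < Real.pi * Real.pi := by positivity
      intro h; linarith
    · rw [h1, h2, eight_half, hd0, hd1]
      refine ⟨by simp, ?_⟩
      simp only [det2]
      have : 0 < Real.pi * Real.pi := by positivity
      intro h; linarith
    · exact absurd (h1.trans h2.symm) hst
  · intro p hp
    rw [Finset.mem_singleton] at hp
    subst hp
    exact ⟨0, m0, 1 / 2, m1, by norm_num, eight_zero, eight_half⟩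
  · intro s hs t ht u hu hst he he'
    by_cases hus : s = u
    · left; exact hus.symm
    · obtain ⟨h1, h2⟩ := key s hs t ht hst he
      obtain ⟨h3, h4⟩ := key s hs u hu hus he'
      rcases h1 with h1 | h1 <;> rcases h2 with h2 | h2 <;> rcases h4 with h4 | h4 <;>
        subst h1 <;> subst h2 <;> subst h4 <;> simp at hst hus ⊢

/-- Whitney number of a function. -/
def WF (f : ℝ → ℂ) (ω : ℤ) : Prop :=
  ∃ θ : ℝ → ℝ, Continuous θ ∧
    (∀ t : ℝ, deriv f t = (‖deriv f t‖ : ℂ) * Complex.exp ((θ t : ℂ) * Complex.I)) ∧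
    θ 1 - θ 0 = 2 * Real.pi * (ω : ℝ)

theorem WF.conj {f : ℝ → ℂ} {ω : ℤ} (h : WF f ω) :
    WF (fun t => (starRingEnd ℂ) (f t)) (-ω) := by
  obtain ⟨θ, hc, hl, hw⟩ := h
  have dd : ∀ t, deriv (fun t => (starRingEnd ℂ) (f t)) t = (starRingEnd ℂ) (deriv f t) := by
    intro t
    exact deriv.star (f := f)
  refine ⟨fun t => -θ t, hc.neg, ?_, ?_⟩
  · intro t
    rw [dd, Complex.norm_conj]
    conv_lhs => rw [hl t]
    rw [map_mul, Complex.conj_ofReal, ← Complex.exp_conj, map_mul, Complex.conj_ofReal, Complex.conj_I]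
    congr 2; push_cast; ring
  · push_cast; linarith

theorem WF_zero : WF eight 0 := by
  have hpi := Real.pi_pos
  have hsl : ∀ t, Complex.I * deriv eight t ∈ Complex.slitPlane := by
    intro t
    rw [eight_deriv, Complex.mem_slitPlane_iff]
    simp only [Complex.mul_re, Complex.mul_im, Complex.I_re, Complex.I_im]
    by_cases h : Real.cos (2 * Real.pi * t) = 0
    · left
      rw [show 4 * Real.pi * t = 2 * (2 * Real.pi * t) by ring, Real.cos_two_mul, h]
      nlinarith
    · right
      have : 2 * Real.pi * Real.cos (2 * Real.pi * t) ≠ 0 := by positivity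
      simpa using this
  have hcont : Continuous (deriv eight) := by
    have : deriv eight = fun t => ((2 * Real.pi * Real.cos (2 * Real.pi * t) : ℝ) : ℂ) +
        ((4 * Real.pi * Real.cos (4 * Real.pi * t) : ℝ) : ℂ) * Complex.I := by
      funext t; rw [eight_deriv, Complex.mk_eq_add_mul_I]
    rw [this]
    fun_prop
  refine ⟨fun t => Complex.arg (Complex.I * deriv eight t) - Real.pi / 2, ?_, ?_, ?_⟩
  · refine Continuous.sub ?_ continuous_const
    rw [continuous_iff_continuousAt]
    intro t
    exact (Complex.continuousAt_arg (hsl t)).comp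
      (f := fun t => Complex.I * deriv eight t) (continuous_const.mul hcont).continuousAt
  · intro t
    have h := Complex.norm_mul_exp_arg_mul_I (Complex.I * deriv eight t)
    rw [norm_mul, Complex.norm_I, one_mul] at h
    have e : Complex.exp (((Complex.arg (Complex.I * deriv eight t) - Real.pi / 2 : ℝ) : ℂ) * Complex.I) =
        Complex.exp ((Complex.arg (Complex.I * deriv eight t) : ℂ) * Complex.I) * (-Complex.I) := by
      rw [Complex.ofReal_sub, sub_mul, sub_eq_add_neg, Complex.exp_add]
      congr 1
      rw [show -(((Real.pi / 2 : ℝ) : ℂ) * Complex.I) = -Real.pi / 2 * Complex.I by push_cast; ring]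
      exact Complex.exp_neg_pi_div_two_mul_I
    rw [e, ← mul_assoc, h]
    linear_combination (deriv eight t) * Complex.I_mul_I
  · have : deriv eight 1 = deriv eight 0 := by
      rw [eight_deriv, eight_deriv]
      simp only [mul_one, mul_zero, Real.cos_zero, Real.cos_two_pi]
      rw [show 4 * Real.pi = 2 * Real.pi + 2 * Real.pi by ring, Real.cos_add_two_pi, Real.cos_two_pi, mul_one]
    beta_reduce
    rw [this]; simp

theorem WF_pos (k : ℕ) : WF (deltaFunPos (k + 1)) ((k + 1 : ℕ) : ℤ) := by
  have hpi := Real.pi_pos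
  set v : ℝ → ℂ := fun t => 1 + (2 / 3) * Complex.exp (((-(2 * Real.pi * k * t) : ℝ) : ℂ) * Complex.I) with hv
  have hvc : Continuous v := by fun_prop
  have hsl : ∀ t, v t ∈ Complex.slitPlane := by
    intro t
    rw [Complex.mem_slitPlane_iff]; left
    have h1 := Complex.abs_re_le_norm ((2 / 3) * Complex.exp (((-(2 * Real.pi * k * t) : ℝ) : ℂ) * Complex.I))
    rw [norm_mul, Complex.norm_exp_ofReal_mul_I] at h1
    have h2 := (abs_le.1 h1).1
    norm_num at h2
    simp only [hv, Complex.add_re, Complex.one_re]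
    norm_num
    linarith
  have hd : ∀ t, deriv (deltaFunPos (k + 1)) t =
      ((2 * Real.pi * (k + 1) * ‖v t‖ : ℝ) : ℂ) *
        Complex.exp (((Real.pi / 2 + 2 * Real.pi * (k + 1) * t + Complex.arg (v t) : ℝ) : ℂ) * Complex.I) := by
    intro t
    have h := Complex.norm_mul_exp_arg_mul_I (v t)
    have e : Complex.exp (((Real.pi / 2 + 2 * Real.pi * (k + 1) * t + Complex.arg (v t) : ℝ) : ℂ) * Complex.I)
        = Complex.I * ee t ^ (k + 1) * Complex.exp ((Complex.arg (v t) : ℂ) * Complex.I) := by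
      rw [Complex.ofReal_add, Complex.ofReal_add, add_mul, add_mul, Complex.exp_add, Complex.exp_add]
      congr 2
      · push_cast; exact Complex.exp_pi_div_two_mul_I
      · rw [ee, ← Complex.exp_nat_mul]; congr 1; push_cast; ring
    have e3 : ee t ^ (k + 1) * Complex.exp (((-(2 * Real.pi * k * t) : ℝ) : ℂ) * Complex.I) = ee t := by
      rw [ee, ← Complex.exp_nat_mul, ← Complex.exp_add]; congr 1; push_cast; ring
    rw [e, dfp_deriv (k + 1) (by omega)]
    have e4 : ee t ^ (k + 1) * v t = ee t ^ (k + 1) + 2 / 3 * ee t := by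
      simp only [hv]; linear_combination (2 / 3) * e3
    rw [← e4]
    conv_lhs => rw [← h]
    push_cast; ring
  refine ⟨fun t => Real.pi / 2 + 2 * Real.pi * (k + 1) * t + Complex.arg (v t), ?_, ?_, ?_⟩
  · refine Continuous.add (by fun_prop) ?_
    rw [continuous_iff_continuousAt]
    intro t
    exact (Complex.continuousAt_arg (hsl t)).comp (f := v) hvc.continuousAt
  · intro t
    have hn : ‖deriv (deltaFunPos (k + 1)) t‖ = 2 * Real.pi * (k + 1) * ‖v t‖ := by
      rw [hd t, norm_mul, Complex.norm_exp_ofReal_mul_I, mul_one, Complex.norm_real, Real.norm_eq_abs,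
        abs_of_nonneg (by positivity)]
    rw [hn]; exact hd t
  · have : v 1 = v 0 := by
      simp only [hv, mul_one, mul_zero, neg_zero, Complex.ofReal_zero, zero_mul, Complex.exp_zero]
      have : Complex.exp (((-(2 * Real.pi * k) : ℝ) : ℂ) * Complex.I) = 1 := by
        rw [Complex.exp_eq_one_iff]
        exact ⟨-k, by push_cast; ring⟩
      rw [this]; ring
    beta_reduce
    rw [this]; push_cast; ring

theorem ddata_pos (k : ℕ) : DData (deltaFunPos (k + 1)) k := by
  rcases Nat.eq_zero_or_pos k with rfl | h
  · exact ddata_one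
  · exact ddata_big k h

theorem delta_all (ω : ℤ) : DData (deltaFun ω) (|ω| - 1).natAbs ∧ WF (deltaFun ω) ω := by
  rcases lt_trichotomy ω 0 with h | h | h
  · obtain ⟨k, rfl⟩ : ∃ k : ℕ, ω = -((k + 1 : ℕ) : ℤ) := ⟨(-ω).toNat - 1, by omega⟩
    have e : deltaFun (-((k + 1 : ℕ) : ℤ)) = fun t => (starRingEnd ℂ) (deltaFunPos (k + 1) t) := by
      rw [deltaFun, if_neg (by omega), if_neg (by omega), neg_neg, Int.toNat_natCast]
    rw [e]
    have hn : (|(-((k + 1 : ℕ) : ℤ))| - 1).natAbs = k := by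
      rw [abs_neg, abs_of_nonneg (by omega)]; omega
    rw [hn]
    exact ⟨(ddata_pos k).conj, (WF_pos k).conj⟩
  · subst h
    have e : deltaFun 0 = eight := by rw [deltaFun, if_pos rfl]; rfl
    rw [e]
    exact ⟨ddata_zero, WF_zero⟩
  · obtain ⟨k, rfl⟩ : ∃ k : ℕ, ω = ((k + 1 : ℕ) : ℤ) := ⟨ω.toNat - 1, by omega⟩
    have e : deltaFun ((k + 1 : ℕ) : ℤ) = deltaFunPos (k + 1) := by
      rw [deltaFun, if_neg (by omega), if_pos (by omega), Int.toNat_natCast]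
    rw [e]
    have hn : (|((k + 1 : ℕ) : ℤ)| - 1).natAbs = k := by
      rw [abs_of_nonneg (by omega)]; omega
    rw [hn]
    exact ⟨ddata_pos k, WF_pos k⟩


/-- first part of the Corollary. For every integer `ω`, the standard
curve `δ_ω` has the minimal number of crossings among all stable planar curves with
Whitney winding number `ω`, and this minimal number equals `||ω| - 1|`. -/
theorem statement11 (ω : ℤ) (δ : PlanarCurve) (hδ : δ.toFun = PlanarCurve.deltaFun ω) :
    δ.Stable ∧ δ.HasWhitney ω ∧ δ.crossings = (|ω| - 1).natAbs ∧
    ∀ c : PlanarCurve, c.Stable → c.HasWhitney ω → δ.crossings ≤ c.crossings := by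
  obtain ⟨hD, hW⟩ := delta_all ω
  rw [← hδ] at hD hW
  have hc : δ.crossings = (|ω| - 1).natAbs := hD.stable.2
  refine ⟨hD.stable.1, hW, hc, fun c hs hw => ?_⟩
  rw [hc]
  exact lower_bound c ω hs hw

end CurvePaper
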